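/- arXiv:1505.00386 — 2 statements merged into one kernel-verified Lean document; each statement's English description precedes it below -/
import Mathlib

section
/- Let G be a connected graph that is {K_{1,3}, B_{1,2}}-free. Then G contains P_6 as an induced subgraph if and only if G belongs to P(6). -/
open SimpleGraph

def graphOfList (n : ℕ) (E : List (Fin n × Fin n)) : SimpleGraph (Fin n) :=
  SimpleGraph.fromRel (fun a b => (a, b) ∈ E)

/-- The claw `K_{1,3}`, with center `0`. -/
def K13 : SimpleGraph (Fin 4) := graphOfList 4 [(0,1), (0,2), (0,3)]

/-- `B_{1,m} = N_{1,m,0}`: a triangle `0,1,2`, a pendant vertex `3` attached to `0`,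
and a path `4,5,…,m+3` of length `m` attached at the vertex `1`. -/
def Bgraph (m : ℕ) : SimpleGraph (Fin (m + 4)) :=
  SimpleGraph.fromRel (fun a b =>
    (a.val = 0 ∧ b.val = 1) ∨ (a.val = 0 ∧ b.val = 2) ∨ (a.val = 1 ∧ b.val = 2) ∨
    (a.val = 0 ∧ b.val = 3) ∨ (a.val = 1 ∧ b.val = 4) ∨
    (4 ≤ a.val ∧ b.val = a.val + 1))

/-- `G` contains `H` as an induced subgraph. -/
def ContainsInduced {V W : Type*} (G : SimpleGraph V) (H : SimpleGraph W) : Prop :=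
  Nonempty (H ↪g G)

/-- The cliques `L 0, …, L (l-1)` form an (induced) fat `l`-path decomposition:
they are nonempty, pairwise disjoint, and two distinct vertices lying in them are adjacent
iff they lie in the same clique or in consecutive cliques. -/
def IsFatPathDecomp {V : Type*} (G : SimpleGraph V) (l : ℕ) (L : Fin l → Set V) : Prop :=
  (∀ i, (L i).Nonempty) ∧
  (∀ i j, i ≠ j → Disjoint (L i) (L j)) ∧
  (∀ (i j : Fin l) (u v : V), u ∈ L i → v ∈ L j → u ≠ v →
    (G.Adj u v ↔ i = j ∨ (i : ℕ) + 1 = (j : ℕ) ∨ (j : ℕ) + 1 = (i : ℕ)))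

/-- The cliques `L 0, …, L l` form an (induced) fat `l`-cycle decomposition:
they are nonempty, pairwise disjoint, and two distinct vertices lying in them are adjacent
iff they lie in the same clique or in (cyclically) consecutive cliques. -/
def IsFatCycleDecomp {V : Type*} (G : SimpleGraph V) (l : ℕ) (L : Fin (l + 1) → Set V) : Prop :=
  (∀ i, (L i).Nonempty) ∧
  (∀ i j, i ≠ j → Disjoint (L i) (L j)) ∧
  (∀ (i j : Fin (l + 1)) (u v : V), u ∈ L i → v ∈ L j → u ≠ v →
    (G.Adj u v ↔ i = j ∨ ((i : ℕ) + 1) % (l + 1) = (j : ℕ) ∨ ((j : ℕ) + 1) % (l + 1) = (i : ℕ)))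

/-- `G` is a fat `l`-path (so `l ≥ 5` and the fundamental cliques cover `G`). -/
def IsFatPath {V : Type*} (G : SimpleGraph V) (l : ℕ) : Prop :=
  5 ≤ l ∧ ∃ L : Fin l → Set V, IsFatPathDecomp G l L ∧ ∀ v : V, ∃ i, v ∈ L i

/-- `G` is a fat `l`-cycle (so `l ≥ 5` and the `l+1` fundamental cliques cover `G`). -/
def IsFatCycle {V : Type*} (G : SimpleGraph V) (l : ℕ) : Prop :=
  5 ≤ l ∧ ∃ L : Fin (l + 1) → Set V, IsFatCycleDecomp G l L ∧ ∀ v : V, ∃ i, v ∈ L i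

/-- `G` belongs to the family `𝒫(p)` of all fat `i`-paths and fat `i`-cycles with `i ≥ p`. -/
def MemFatFamily {V : Type*} (G : SimpleGraph V) (p : ℕ) : Prop :=
  ∃ l, p ≤ l ∧ (IsFatPath G l ∨ IsFatCycle G l)

/-!
Let `v` be a vertex outside an induced path on at least six vertices of a claw- and `B_{1,2}`-free
graph. The claw puts next to every neighbour of `v` inside the path another neighbour of `v` on
the path and forbids three pairwise nonadjacent ones; `B_{1,2}` then leaves only two cases. Either
`v` sees at most the two ends of the path, or `v` is a twin of a path vertex: its neighbours on
the path are exactly the closed neighbourhood of that vertex. If `v` does see an end, the first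
case produces a longer induced path or an induced cycle. Hence every vertex attached to an induced
path that cannot be extended in this way is a twin, and deleting suitable vertices of a long
induced cycle shows the same there.

If every vertex attached to an induced copy of `H` is a twin, replacing a vertex of the copy by a
twin yields another induced copy. Exchanging twins along the edges of a connected graph `G` shows
that every vertex is a twin of a unique vertex of one fixed copy, so `G` is a clique blow-up of `H`,
which is what fat paths and fat cycles are.
-/

section

variable {V ι : Type*} {G : SimpleGraph V} {H : SimpleGraph ι}

/-! ### Clique blow-ups -/

theorem ContainsInduced.trans {W : Type*} {K : SimpleGraph W} (h : ContainsInduced G H)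
    (h' : ContainsInduced H K) : ContainsInduced G K :=
  h.elim fun f => h'.elim fun g => ⟨f.comp g⟩

section ClosedAdj

variable {u v : V} {i j : ι}

/-- `v` lies in the closed neighbourhood `N[u]`. -/
def ClosedAdj (G : SimpleGraph V) (u v : V) : Prop :=
  u = v ∨ G.Adj u v

theorem ClosedAdj.refl (v : V) : ClosedAdj G v v :=
  .inl rfl

theorem closedAdj_comm : ClosedAdj G u v ↔ ClosedAdj G v u :=
  or_congr eq_comm (G.adj_comm u v)

theorem adj_iff_closedAdj_of_ne (h : u ≠ v) : G.Adj u v ↔ ClosedAdj G u v :=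
  (or_iff_right h).symm

theorem closedAdj_map_iff (f : H ↪g G) : ClosedAdj G (f i) (f j) ↔ ClosedAdj H i j :=
  or_congr f.injective.eq_iff f.map_adj_iff

theorem closedAdj_map_iso_iff (e : H ≃g G) : ClosedAdj G (e i) (e j) ↔ ClosedAdj H i j :=
  closedAdj_map_iff e.toEmbedding

/-- An injective map that preserves and reflects closed adjacency, as an embedding. -/
def closedAdjEmbedding (f : ι → V) (hf : Function.Injective f)
    (h : ∀ i j, ClosedAdj G (f i) (f j) ↔ ClosedAdj H i j) : H ↪g G where
  toFun := f
  inj' := hf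
  map_rel_iff' {i j} := by
    obtain rfl | hij := eq_or_ne i j
    · simp
    · exact (adj_iff_closedAdj_of_ne (hf.ne hij)).trans
        ((h i j).trans (adj_iff_closedAdj_of_ne hij).symm)

@[simp]
theorem coe_closedAdjEmbedding (f : ι → V) (hf : Function.Injective f)
    (h : ∀ i j, ClosedAdj G (f i) (f j) ↔ ClosedAdj H i j) : ⇑(closedAdjEmbedding f hf h) = f :=
  rfl

end ClosedAdj

/-- `c` exhibits `G` as a blow-up of `H`: every vertex `i` of `H` is replaced by the nonempty
clique `c ⁻¹' {i}`, and cliques over adjacent vertices are completely joined. -/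
structure IsCliqueBlowup (G : SimpleGraph V) (H : SimpleGraph ι) (c : V → ι) : Prop where
  surjective : Function.Surjective c
  closedAdj_iff : ∀ u v, ClosedAdj G u v ↔ ClosedAdj H (c u) (c v)

theorem IsCliqueBlowup.containsInduced {c : V → ι} (h : IsCliqueBlowup G H c) :
    ContainsInduced G H :=
  ⟨closedAdjEmbedding _ (Function.injective_surjInv h.surjective) fun i j => by
    rw [h.closedAdj_iff, Function.surjInv_eq h.surjective, Function.surjInv_eq h.surjective]⟩

theorem exists_isCliqueBlowup_iff :
    (∃ c, IsCliqueBlowup G H c) ↔ ∃ L : ι → Set V, ((∀ i, (L i).Nonempty) ∧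
      (∀ i j, i ≠ j → Disjoint (L i) (L j)) ∧
      ∀ i j u v, u ∈ L i → v ∈ L j → u ≠ v → (G.Adj u v ↔ ClosedAdj H i j)) ∧
        ∀ v, ∃ i, v ∈ L i := by
  constructor
  · rintro ⟨c, hc⟩
    refine ⟨fun i => c ⁻¹' {i}, ⟨hc.surjective, fun i j hij => ?_, ?_⟩, fun v => ⟨c v, rfl⟩⟩
    · exact (Set.disjoint_singleton.2 hij).preimage c
    · rintro _ _ u v rfl rfl huv
      rw [adj_iff_closedAdj_of_ne huv, hc.closedAdj_iff]
  · rintro ⟨L, ⟨hne, hdisj, hadj⟩, hcover⟩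
    choose c hc using hcover
    have hc_eq : ∀ {v i}, v ∈ L i → c v = i := fun {v i} hv => by
      by_contra hne
      exact Set.disjoint_left.1 (hdisj _ _ hne) (hc v) hv
    refine ⟨c, fun i => (hne i).imp fun v => hc_eq, fun u v => ?_⟩
    obtain rfl | huv := eq_or_ne u v
    · exact iff_of_true (.refl u) (.refl _)
    · rw [← adj_iff_closedAdj_of_ne huv, hadj _ _ u v (hc u) (hc v) huv]

section Twins

variable {f : H ↪g G} {u v w : V} {i j k : ι}

/-- `v` has the same closed neighbours on the copy `f` of `H` as the vertex `f j`. -/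
def IsTwinAt (f : H ↪g G) (v : V) (j : ι) : Prop :=
  ∀ k, ClosedAdj G v (f k) ↔ ClosedAdj H j k

/-- Every vertex in or next to an induced copy of `H` is a twin of a vertex of that copy. -/
def AttachesAsTwin (G : SimpleGraph V) (H : SimpleGraph ι) : Prop :=
  ∀ (f : H ↪g G) (v : V), (∃ k, ClosedAdj G v (f k)) → ∃ j, IsTwinAt f v j

/-- The closed neighbourhood of `j` is determined among all closed neighbourhoods of `H` by its
restriction to the vertices other than `i`. -/
def RecognizedOff (H : SimpleGraph ι) (i j : ι) : Prop :=
  ∀ j', (∀ k, k ≠ i → (ClosedAdj H j' k ↔ ClosedAdj H j k)) → j' = j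

theorem isTwinAt_apply (f : H ↪g G) (i : ι) : IsTwinAt f (f i) i := fun _ => closedAdj_map_iff f

theorem IsTwinAt.eq (hrec : RecognizedOff H j j) (hi : IsTwinAt f v i) (hj : IsTwinAt f v j) :
    i = j :=
  hrec i fun k _ => (hi k).symm.trans (hj k)

theorem RecognizedOff.map (e : H ≃g H) (h : RecognizedOff H i j) :
    RecognizedOff H (e i) (e j) := by
  intro j' hj'
  obtain ⟨j', rfl⟩ := e.surjective j'
  refine congrArg e (h j' fun k hk => ?_)
  rw [← closedAdj_map_iso_iff e, ← closedAdj_map_iso_iff (i := j) e]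
  exact hj' (e k) (e.injective.ne hk)

theorem exists_ne_closedAdj (hH : ∀ j, ∃ k, H.Adj j k) (i j : ι) :
    ∃ k, k ≠ i ∧ ClosedAdj H j k := by
  obtain rfl | hij := eq_or_ne j i
  · obtain ⟨k, hk⟩ := hH j
    exact ⟨k, hk.ne', .inr hk⟩
  · exact ⟨j, hij, .refl j⟩

theorem exists_exchange (hrec : ∀ j, RecognizedOff H j j) (hu : IsTwinAt f u i) :
    ∃ g : H ↪g G, g i = u ∧ ∀ k, k ≠ i → g k = f k := by
  classical
  have h : ∀ a b, ClosedAdj G (Function.update f i u a) (Function.update f i u b) ↔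
      ClosedAdj H a b := by
    intro a b
    by_cases ha : a = i <;> by_cases hb : b = i
    · simp [ha, hb, ClosedAdj.refl]
    · simpa [ha, hb] using hu b
    · simpa [ha, hb, closedAdj_comm] using hu a
    · simpa [ha, hb] using closedAdj_map_iff f
  have hinj : Function.Injective (Function.update f i u) := fun a b hab =>
    hrec b a fun k _ => by rw [← h, ← h, hab]
  exact ⟨closedAdjEmbedding _ hinj h, by simp, fun k hk => by simp [hk]⟩

theorem IsTwinAt.closedAdj_iff_of_recognizedOff (hH : ∀ j, ∃ k, H.Adj j k)
    (hrec : ∀ j, RecognizedOff H j j) (hattach : AttachesAsTwin G H) (hu : IsTwinAt f u i)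
    (hw : IsTwinAt f w j) (hij : RecognizedOff H i j) : ClosedAdj G w u ↔ ClosedAdj H j i := by
  obtain ⟨g, rfl, hg⟩ := exists_exchange hrec hu
  have hwg : ∀ k, k ≠ i → (ClosedAdj G w (g k) ↔ ClosedAdj H j k) := fun k hk => by
    rw [hg k hk, hw k]
  obtain ⟨k, hki, hjk⟩ := exists_ne_closedAdj hH i j
  obtain ⟨j', hj'⟩ := hattach g w ⟨k, (hwg k hki).2 hjk⟩
  obtain rfl := hij j' fun k hk => (hj' k).symm.trans (hwg k hk)
  exact hj' i

theorem exists_isTwinAt_of_adj (hH : ∀ j, ∃ k, H.Adj j k)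
    (hrec : ∀ j, RecognizedOff H j j) (hattach : AttachesAsTwin G H) (hu : IsTwinAt f u i)
    (huw : G.Adj u w) : ∃ j, IsTwinAt f w j := by
  obtain ⟨g, rfl, hg⟩ := exists_exchange hrec hu
  obtain ⟨j, hj⟩ := hattach g w ⟨i, .inr huw.symm⟩
  obtain ⟨k, hki, hjk⟩ := exists_ne_closedAdj hH i j
  exact hattach f w ⟨k, hg k hki ▸ (hj k).2 hjk⟩

theorem exists_isCliqueBlowup [Nonempty ι] (hconn : G.Connected) (hH : ∀ j, ∃ k, H.Adj j k)
    (hrec : ∀ i j, RecognizedOff H i j ∨ RecognizedOff H j i) (hattach : AttachesAsTwin G H)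
    (hind : ContainsInduced G H) : ∃ c, IsCliqueBlowup G H c := by
  obtain ⟨f⟩ := hind
  have hself : ∀ j, RecognizedOff H j j := fun j => or_self_iff.1 (hrec j j)
  have htwin : ∀ v, ∃ j, IsTwinAt f v j := fun v => by
    induction (reachable_iff_reflTransGen _ _).1 (hconn (f (Classical.arbitrary ι)) v) with
    | refl => exact ⟨_, isTwinAt_apply f _⟩
    | tail _ hadj ih =>
      obtain ⟨i, hi⟩ := ih
      exact exists_isTwinAt_of_adj hH hself hattach hi hadj
  choose c hc using htwin
  refine ⟨c, fun i => ⟨f i, (hc _).eq (hself i) (isTwinAt_apply f i)⟩, fun u v => ?_⟩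
  rcases hrec (c u) (c v) with h | h
  · rw [closedAdj_comm, (hc u).closedAdj_iff_of_recognizedOff hH hself hattach (hc v) h,
      closedAdj_comm]
  · exact (hc v).closedAdj_iff_of_recognizedOff hH hself hattach (hc u) h

end Twins

/-! ### Paths and cycles -/

section PathCycle

variable {l n : ℕ}

theorem closedAdj_pathGraph_iff {i j : Fin l} :
    ClosedAdj (pathGraph l) i j ↔ (i : ℕ) ≤ j + 1 ∧ (j : ℕ) ≤ i + 1 := by
  rw [ClosedAdj, pathGraph_adj, Fin.ext_iff]
  omega

theorem closedAdj_cycleGraph_iff {i j : Fin n} :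
    ClosedAdj (cycleGraph n) i j ↔ (i : ℕ) = j ∨ (i : ℕ) + 1 = j ∨ (j : ℕ) + 1 = i ∨
      (i : ℕ) = 0 ∧ (j : ℕ) + 1 = n ∨ (j : ℕ) = 0 ∧ (i : ℕ) + 1 = n := by
  obtain rfl | hij := eq_or_ne i j
  · exact iff_of_true (.refl i) (.inl rfl)
  have hne := Fin.val_ne_iff.2 hij
  rw [← adj_iff_closedAdj_of_ne hij, cycleGraph_adj', Fin.val_sub, Fin.val_sub]
  rcases hne.lt_or_gt with h | h
  · rw [Nat.mod_eq_of_lt (by omega), Nat.mod_eq_sub_mod (by omega), Nat.mod_eq_of_lt (by omega)]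
    omega
  · rw [Nat.mod_eq_sub_mod (by omega), Nat.mod_eq_of_lt (by omega), Nat.mod_eq_of_lt (by omega)]
    omega

theorem isFatPath_iff : IsFatPath G l ↔ 5 ≤ l ∧ ∃ c, IsCliqueBlowup G (pathGraph l) c := by
  simp only [IsFatPath, IsFatPathDecomp, exists_isCliqueBlowup_iff, ClosedAdj, pathGraph_adj]

theorem isFatCycle_iff :
    IsFatCycle G l ↔ 5 ≤ l ∧ ∃ c, IsCliqueBlowup G (cycleGraph (l + 1)) c := by
  have hmod : ∀ i j : Fin (l + 1), (i = j ∨ ((i : ℕ) + 1) % (l + 1) = (j : ℕ) ∨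
      ((j : ℕ) + 1) % (l + 1) = (i : ℕ)) ↔ ClosedAdj (cycleGraph (l + 1)) i j := by
    intro i j
    rw [closedAdj_cycleGraph_iff, Fin.ext_iff]
    have hsucc : ∀ k : Fin (l + 1), (k : ℕ) = l ∧ ((k : ℕ) + 1) % (l + 1) = 0 ∨
        (k : ℕ) < l ∧ ((k : ℕ) + 1) % (l + 1) = k + 1 := fun k => by
      rcases (Fin.is_le k).eq_or_lt with h | h
      · exact .inl ⟨h, by rw [h, Nat.mod_self]⟩
      · exact .inr ⟨h, Nat.mod_eq_of_lt (by omega)⟩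
    have := hsucc i
    have := hsucc j
    omega
  simp only [IsFatCycle, IsFatCycleDecomp, exists_isCliqueBlowup_iff, hmod]

-- `N[0]` and `N[1]` differ only in the vertex `2`, and symmetrically at the other end; these are
-- the only obstructions.
theorem recognizedOff_pathGraph (hl : 5 ≤ l) {i j : Fin l} (hlow : ¬((i : ℕ) = 2 ∧ (j : ℕ) < 2))
    (hhigh : ¬((i : ℕ) + 3 = l ∧ l < (j : ℕ) + 3)) : RecognizedOff (pathGraph l) i j := by
  intro j' h
  simp only [closedAdj_pathGraph_iff, ne_eq, Fin.ext_iff, Fin.forall_iff] at h ⊢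
  have h1 := h (j + 1)
  have h2 := h (j - 1)
  have h3 := h (j + 2)
  have h4 := h (j - 2)
  have h5 := h j'
  have h6 := h j
  omega

theorem recognizedOff_or_recognizedOff_pathGraph (hl : 5 ≤ l) (i j : Fin l) :
    RecognizedOff (pathGraph l) i j ∨ RecognizedOff (pathGraph l) j i := by
  by_cases h : (i : ℕ) = 2 ∧ (j : ℕ) < 2 ∨ (i : ℕ) + 3 = l ∧ l < (j : ℕ) + 3
  · exact .inr (recognizedOff_pathGraph hl (by omega) (by omega))
  · exact .inl (recognizedOff_pathGraph hl (by omega) (by omega))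

/-- The rotation of the cycle by `d` steps. -/
def cycleRotation (d : Fin (n + 1)) : cycleGraph (n + 1) ≃g cycleGraph (n + 1) where
  toEquiv := Equiv.addRight d
  map_rel_iff' := by
    simp only [cycleGraph_eq_circulantGraph, Equiv.coe_addRight, circulantGraph_adj_translate,
      implies_true]

theorem exists_cycleRotation_eq (i j : Fin (n + 1)) : ∃ d, cycleRotation d i = j :=
  ⟨j - i, add_sub_cancel i j⟩

theorem recognizedOff_cycleGraph (hn : 4 ≤ n) (i j : Fin (n + 1)) :
    RecognizedOff (cycleGraph (n + 1)) i j := by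
  obtain ⟨d, rfl⟩ := exists_cycleRotation_eq ⟨2, by omega⟩ j
  obtain ⟨i, rfl⟩ := (cycleRotation d).surjective i
  refine RecognizedOff.map (cycleRotation d) fun j' h => ?_
  simp only [closedAdj_cycleGraph_iff, ne_eq, Fin.ext_iff, Fin.forall_iff] at h ⊢
  have h0 := h 0
  have h1 := h 1
  have h2 := h 2
  have h3 := h 3
  have h4 := h 4
  omega

theorem exists_forall_not_closedAdj_cycleGraph (hn : 5 ≤ n) (k : Fin (n + 1)) :
    ∃ w, ∀ j, ClosedAdj (cycleGraph (n + 1)) j k → ¬ ClosedAdj (cycleGraph (n + 1)) j w := by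
  obtain ⟨d, rfl⟩ := exists_cycleRotation_eq ⟨2, by omega⟩ k
  refine ⟨cycleRotation d ⟨5, by omega⟩, fun j => ?_⟩
  obtain ⟨j, rfl⟩ := (cycleRotation d).surjective j
  simp only [closedAdj_map_iso_iff, closedAdj_cycleGraph_iff]
  omega

theorem eq_of_forall_ne_closedAdj_cycleGraph (hn : 4 ≤ n) {i j : Fin (n + 1)}
    (h : ∀ k, k ≠ i → ClosedAdj (cycleGraph (n + 1)) i k → ClosedAdj (cycleGraph (n + 1)) j k) :
    j = i := by
  obtain ⟨d, rfl⟩ := exists_cycleRotation_eq ⟨2, by omega⟩ i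
  obtain ⟨j, rfl⟩ := (cycleRotation d).surjective j
  have hj : ∀ k : Fin (n + 1), (k : ℕ) = 1 ∨ (k : ℕ) = 3 → ClosedAdj (cycleGraph (n + 1)) j k := by
    intro k hk
    rw [← closedAdj_map_iso_iff (cycleRotation d)]
    refine h _ ((cycleRotation d).injective.ne (Fin.ne_of_val_ne ?_))
      ((closedAdj_map_iso_iff _).2 (closedAdj_cycleGraph_iff.2 ?_)) <;> simp only <;> omega
  have h1 := hj ⟨1, by omega⟩ (.inl rfl)
  have h3 := hj ⟨3, by omega⟩ (.inr rfl)
  rw [closedAdj_cycleGraph_iff] at h1 h3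
  exact congrArg _ (Fin.ext (by simp only at h1 h3 ⊢; omega))

theorem closedAdj_pathGraph_castSucc_iff {i j : Fin l} :
    ClosedAdj (pathGraph (l + 1)) i.castSucc j.castSucc ↔ ClosedAdj (pathGraph l) i j := by
  simp only [closedAdj_pathGraph_iff, Fin.val_castSucc]

theorem closedAdj_cycleGraph_castSucc_iff {i j : Fin l} :
    ClosedAdj (cycleGraph (l + 1)) i.castSucc j.castSucc ↔ ClosedAdj (pathGraph l) i j := by
  simp only [closedAdj_cycleGraph_iff, closedAdj_pathGraph_iff, Fin.val_castSucc]
  omega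

/-- The cycle of length `l + 1` with its last vertex removed is a path on `l` vertices. -/
def pathGraphEmbeddingCycleGraph (l : ℕ) : pathGraph l ↪g cycleGraph (l + 1) :=
  closedAdjEmbedding Fin.castSucc (Fin.castSucc_injective l)
    fun _ _ => closedAdj_cycleGraph_castSucc_iff

theorem containsInduced_pathGraph_of_le {k : ℕ} (h : k ≤ l) :
    ContainsInduced (pathGraph l) (pathGraph k) :=
  ⟨closedAdjEmbedding (Fin.castLE h) (Fin.castLE_injective h) fun i j => by
    simp only [closedAdj_pathGraph_iff, Fin.val_castLE]⟩

theorem containsInduced_of_snoc {H : SimpleGraph (Fin (l + 1))} {v : V} (f : pathGraph l ↪g G)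
    (hH : ∀ i j : Fin l, ClosedAdj H i.castSucc j.castSucc ↔ ClosedAdj (pathGraph l) i j)
    (hv : v ∉ Set.range f)
    (hadj : ∀ k, ClosedAdj G v (f k) ↔ ClosedAdj H (Fin.last l) k.castSucc) :
    ContainsInduced G H := by
  refine ⟨closedAdjEmbedding (Fin.snoc f v : Fin (l + 1) → V) ?_ fun i j => ?_⟩
  · exact Fin.snoc_injective_iff.2 ⟨f.injective, hv⟩
  · cases i using Fin.lastCases <;> cases j using Fin.lastCases
    · simp [ClosedAdj.refl]
    · simpa using hadj _
    · simpa [closedAdj_comm] using hadj _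
    · simpa [hH] using closedAdj_map_iff f

end PathCycle

/-! ### Neighbours on an induced path -/

theorem adj_of_clawFree (hK : ¬ ContainsInduced G K13) {a b c d : V}
    (hab : G.Adj a b) (hac : G.Adj a c) (had : G.Adj a d) (hbc : b ≠ c) (hbd : b ≠ d)
    (hcd : c ≠ d) : G.Adj b c ∨ G.Adj b d ∨ G.Adj c d := by
  by_contra! hind
  have hinj : Function.Injective ![a, b, c, d] := by
    simp [Fin.forall_fin_succ, Function.Injective, hab.ne, hac.ne, had.ne, hbc, hbd, hcd,
      hab.ne', hac.ne', had.ne', hbc.symm, hbd.symm, hcd.symm]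
  refine hK ⟨⟨⟨_, hinj⟩, fun {i j} => ?_⟩⟩
  fin_cases i <;> fin_cases j <;> simp_all [K13, graphOfList, G.adj_comm]

theorem eq_of_forall_bgraph_two_adj_iff :
    ∀ i j, (∀ k, (Bgraph 2).Adj i k ↔ (Bgraph 2).Adj j k) → i = j := by
  simp [Bgraph, Fin.forall_fin_succ]

theorem false_of_induced_bgraph_two (hB : ¬ ContainsInduced G (Bgraph 2)) {a b c x y z : V}
    (hab : G.Adj a b) (hac : G.Adj a c) (hbc : G.Adj b c)
    (hax : G.Adj a x) (hby : G.Adj b y) (hyz : G.Adj y z)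
    (hay : ¬ G.Adj a y) (haz : ¬ G.Adj a z) (hbx : ¬ G.Adj b x) (hbz : ¬ G.Adj b z)
    (hcx : ¬ G.Adj c x) (hcy : ¬ G.Adj c y) (hcz : ¬ G.Adj c z)
    (hxy : ¬ G.Adj x y) (hxz : ¬ G.Adj x z) : False := by
  have hadj : ∀ i j,
      G.Adj (![a, b, c, x, y, z] i) (![a, b, c, x, y, z] j) ↔ (Bgraph 2).Adj i j := by
    intro i j
    fin_cases i <;> fin_cases j <;> simp_all [Bgraph, G.adj_comm]
  have hinj : Function.Injective ![a, b, c, x, y, z] := fun i j hij =>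
    eq_of_forall_bgraph_two_adj_iff i j fun k => by rw [← hadj, ← hadj, hij]
  exact hB ⟨⟨⟨_, hinj⟩, hadj _ _⟩⟩

/-- The positions on the induced path `f` of the neighbours of `v`. They are natural numbers rather
than elements of `Fin l` so that shifted positions such as `i + 1` carry no bound. -/
def pathTrace {l : ℕ} (f : pathGraph l ↪g G) (v : V) : Set ℕ :=
  {k | ∃ h : k < l, G.Adj v (f ⟨k, h⟩)}

theorem mem_pathTrace_iff {l : ℕ} {f : pathGraph l ↪g G} {v : V} {k : ℕ} (h : k < l) :
    k ∈ pathTrace f v ↔ G.Adj v (f ⟨k, h⟩) :=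
  ⟨fun ⟨_, hadj⟩ => hadj, fun hadj => ⟨h, hadj⟩⟩

theorem lt_of_mem_pathTrace {l : ℕ} {f : pathGraph l ↪g G} {v : V} {k : ℕ}
    (h : k ∈ pathTrace f v) : k < l :=
  h.1

section PathTrace

variable {l : ℕ} {f : pathGraph l ↪g G} {v : V} {a b c d e i j k m n : ℕ}

theorem pred_or_succ_mem_pathTrace (hK : ¬ ContainsInduced G K13) (hv : v ∉ Set.range f)
    (hi : i + 1 ∈ pathTrace f v) (hl : i + 2 < l) : i ∈ pathTrace f v ∨ i + 2 ∈ pathTrace f v := by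
  obtain ⟨h, hadj⟩ := hi
  have hne : ∀ k, f k ≠ v := fun k hk => hv ⟨k, hk⟩
  rcases adj_of_clawFree hK hadj.symm
    (f.map_adj_iff.2 (pathGraph_adj.2 (.inr rfl)) : G.Adj _ (f ⟨i, by omega⟩))
    (f.map_adj_iff.2 (pathGraph_adj.2 (.inl rfl)) : G.Adj _ (f ⟨i + 2, hl⟩))
    (hne _).symm (hne _).symm (by simp) with h | h | h
  · exact .inl ⟨_, h⟩
  · exact .inr ⟨_, h⟩
  · rw [f.map_adj_iff, pathGraph_adj] at h
    simp only at h
    omega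

theorem notMem_pathTrace_of_far (hK : ¬ ContainsInduced G K13)
    (hi : i ∈ pathTrace f v) (hj : j ∈ pathTrace f v) (hij : i + 2 ≤ j) (hjk : j + 2 ≤ k) :
    k ∉ pathTrace f v := by
  rintro ⟨_, hvk⟩
  obtain ⟨_, hvi⟩ := hi
  obtain ⟨_, hvj⟩ := hj
  have := adj_of_clawFree hK hvi hvj hvk
  simp only [ne_eq, f.injective.eq_iff, f.map_adj_iff, pathGraph_adj, Fin.mk.injEq] at this
  omega

-- Here and in the next two lemmas the disjunctions admit both orientations of the path, so that a
-- configuration and its mirror image are handled together.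
theorem mem_pathTrace_of_isolated_pair (hB : ¬ ContainsInduced G (Bgraph 2))
    (h : b = a + 1 ∧ c = a + 2 ∧ d = a + 3 ∧ e = a + 4 ∨
      d = e + 1 ∧ c = e + 2 ∧ b = e + 3 ∧ a = e + 4) (hal : a < l) (hel : e < l)
    (ha : a ∉ pathTrace f v) (hb : b ∈ pathTrace f v) (hc : c ∈ pathTrace f v)
    (hd : d ∉ pathTrace f v) : e ∈ pathTrace f v := by
  by_contra he
  have hbl := lt_of_mem_pathTrace hb
  have hcl := lt_of_mem_pathTrace hc
  have hdl : d < l := by omega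
  rw [mem_pathTrace_iff ‹_›] at ha hb hc hd he
  apply false_of_induced_bgraph_two hB (a := f ⟨b, hbl⟩) (b := f ⟨c, hcl⟩) (c := v)
    (x := f ⟨a, hal⟩) (y := f ⟨d, hdl⟩) (z := f ⟨e, hel⟩) <;>
  first
  | assumption
  | rwa [G.adj_comm]
  | simp only [f.map_adj_iff, pathGraph_adj]; omega

theorem mem_or_mem_pathTrace_of_far (hB : ¬ ContainsInduced G (Bgraph 2))
    (h : b = a + 1 ∧ c = a + 2 ∧ d = a + 3 ∨ c = d + 1 ∧ b = d + 2 ∧ a = d + 3) (hdl : d < l)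
    (hmad : m + 2 ≤ a ∧ m + 2 ≤ d ∨ a + 2 ≤ m ∧ d + 2 ≤ m)
    (ha : a ∈ pathTrace f v) (hb : b ∈ pathTrace f v) (hm : m ∈ pathTrace f v) :
    c ∈ pathTrace f v ∨ d ∈ pathTrace f v := by
  by_contra! ⟨hc, hd⟩
  have hal := lt_of_mem_pathTrace ha
  have hbl := lt_of_mem_pathTrace hb
  have hml := lt_of_mem_pathTrace hm
  have hcl : c < l := by omega
  rw [mem_pathTrace_iff ‹_›] at ha hb hc hd hm
  apply false_of_induced_bgraph_two hB (a := v) (b := f ⟨b, hbl⟩) (c := f ⟨a, hal⟩)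
    (x := f ⟨m, hml⟩) (y := f ⟨c, hcl⟩) (z := f ⟨d, hdl⟩) <;>
  first
  | assumption
  | rwa [G.adj_comm]
  | simp only [f.map_adj_iff, pathGraph_adj]; omega

theorem mem_pathTrace_of_adjacent_far (hB : ¬ ContainsInduced G (Bgraph 2))
    (h : b = a + 1 ∧ c = a + 2 ∨ b = c + 1 ∧ a = c + 2) (hcl : c < l)
    (hmn : n = m + 1 ∨ m = n + 1) (hnl : n < l)
    (hfar : a + 2 ≤ m ∧ a + 2 ≤ n ∧ c + 2 ≤ m ∧ c + 2 ≤ n ∨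
      m + 2 ≤ a ∧ n + 2 ≤ a ∧ m + 2 ≤ c ∧ n + 2 ≤ c)
    (ha : a ∈ pathTrace f v) (hb : b ∈ pathTrace f v) (hc : c ∉ pathTrace f v)
    (hm : m ∈ pathTrace f v) : n ∈ pathTrace f v := by
  by_contra hn
  have hal := lt_of_mem_pathTrace ha
  have hbl := lt_of_mem_pathTrace hb
  have hml := lt_of_mem_pathTrace hm
  rw [mem_pathTrace_iff ‹_›] at ha hb hc hm hn
  apply false_of_induced_bgraph_two hB (a := f ⟨b, hbl⟩) (b := v) (c := f ⟨a, hal⟩)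
    (x := f ⟨c, hcl⟩) (y := f ⟨m, hml⟩) (z := f ⟨n, hnl⟩) <;>
  first
  | assumption
  | rwa [G.adj_comm]
  | simp only [f.map_adj_iff, pathGraph_adj]; omega

theorem notMem_pathTrace_of_three_run (hK : ¬ ContainsInduced G K13)
    (hB : ¬ ContainsInduced G (Bgraph 2)) (hl : 6 ≤ l) (h0 : i ∈ pathTrace f v)
    (h1 : i + 1 ∈ pathTrace f v) (h2 : i + 2 ∈ pathTrace f v) : i + 3 ∉ pathTrace f v := by
  intro h3
  have h4 : i + 4 ∉ pathTrace f v := notMem_pathTrace_of_far hK h0 h2 le_rfl le_rfl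
  have h5 : i + 5 ∉ pathTrace f v := notMem_pathTrace_of_far hK h1 h3 le_rfl le_rfl
  by_cases hi5 : i + 5 < l
  · have := mem_or_mem_pathTrace_of_far hB (.inl ⟨rfl, rfl, rfl⟩) hi5 (by omega) h2 h3 h0
    tauto
  obtain ⟨j, rfl⟩ | ⟨rfl, rfl⟩ : (∃ j, i = j + 2) ∨ i = 1 ∧ l = 6 := by
    have := lt_of_mem_pathTrace h3
    by_cases hi : 2 ≤ i
    · exact .inl ⟨i - 2, by omega⟩
    · omega
  · have hj0 : j ∉ pathTrace f v := fun h => notMem_pathTrace_of_far hK h h0 le_rfl le_rfl h2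
    have hj1 : j + 1 ∉ pathTrace f v := fun h => notMem_pathTrace_of_far hK h h1 le_rfl le_rfl h3
    have hjl : j < l := by have := lt_of_mem_pathTrace h0; omega
    have := mem_or_mem_pathTrace_of_far hB (.inr ⟨rfl, rfl, rfl⟩) hjl (by omega) h1 h0 h3
    tauto
  · have h : 0 ∉ pathTrace f v := fun h => notMem_pathTrace_of_far hK h h1 le_rfl le_rfl h3
    exact h4 (mem_pathTrace_of_adjacent_far hB (.inr ⟨rfl, rfl⟩) (by omega) (.inl rfl)
      (by omega) (by omega) h1 h0 h h3)

theorem le_and_le_of_mem_pathTrace_of_three_run (hK : ¬ ContainsInduced G K13)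
    (hB : ¬ ContainsInduced G (Bgraph 2)) (hl : 6 ≤ l) (h0 : i ∈ pathTrace f v)
    (h1 : i + 1 ∈ pathTrace f v) (h2 : i + 2 ∈ pathTrace f v) (hk : k ∈ pathTrace f v) :
    i ≤ k ∧ k ≤ i + 2 := by
  by_contra hne
  obtain h | rfl | rfl | h : k + 2 ≤ i ∨ i = k + 1 ∨ k = i + 3 ∨ i + 4 ≤ k := by omega
  · exact notMem_pathTrace_of_far hK hk h0 h le_rfl h2
  · exact notMem_pathTrace_of_three_run hK hB hl hk h0 h1 h2
  · exact notMem_pathTrace_of_three_run hK hB hl h0 h1 h2 hk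
  · exact notMem_pathTrace_of_far hK h0 h2 le_rfl h hk

theorem mem_or_mem_pathTrace_of_interior_pair (hK : ¬ ContainsInduced G K13)
    (hB : ¬ ContainsInduced G (Bgraph 2)) (hl : 6 ≤ l) (hi : i + 3 < l)
    (h1 : i + 1 ∈ pathTrace f v) (h2 : i + 2 ∈ pathTrace f v) :
    i ∈ pathTrace f v ∨ i + 3 ∈ pathTrace f v := by
  by_contra! ⟨h0, h3⟩
  have hup : i + 4 < l → i + 4 ∈ pathTrace f v := fun h =>
    mem_pathTrace_of_isolated_pair hB (.inl ⟨rfl, rfl, rfl, rfl⟩) (by omega) h h0 h1 h2 h3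
  obtain rfl | ⟨j, rfl⟩ : i = 0 ∨ ∃ j, i = j + 1 := by cases i <;> simp
  · have h4 := hup (by omega)
    by_cases h5 : 5 ∈ pathTrace f v
    · exact h0 (mem_pathTrace_of_adjacent_far hB (.inr ⟨rfl, rfl⟩) (by omega) (.inr rfl)
        (by omega) (by omega) h5 h4 h3 h1)
    · exact h5 (mem_pathTrace_of_adjacent_far hB (.inr ⟨rfl, rfl⟩) (by omega) (.inl rfl)
        (by omega) (by omega) h2 h1 h0 h4)
  have hj : j ∈ pathTrace f v :=
    mem_pathTrace_of_isolated_pair hB (.inr ⟨rfl, rfl, rfl, rfl⟩) hi (by omega) h3 h2 h1 h0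
  by_cases h : j + 5 < l
  · exact notMem_pathTrace_of_far hK hj h1 le_rfl (by omega) (hup h)
  obtain ⟨n, rfl⟩ : ∃ n, j = n + 1 := ⟨j - 1, by omega⟩
  by_cases hn : n ∈ pathTrace f v
  · exact h3 (mem_pathTrace_of_adjacent_far hB (.inl ⟨rfl, rfl⟩) (by omega) (.inl rfl)
      hi (by omega) hn hj h0 h2)
  · exact hn (mem_pathTrace_of_adjacent_far hB (.inl ⟨rfl, rfl⟩) hi (.inr rfl)
      (by omega) (by omega) h1 h2 h3 hj)

theorem le_one_of_mem_pathTrace_of_initial_pair (hK : ¬ ContainsInduced G K13)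
    (hB : ¬ ContainsInduced G (Bgraph 2)) (hl : 6 ≤ l) (hv : v ∉ Set.range f)
    (h0 : 0 ∈ pathTrace f v) (h1 : 1 ∈ pathTrace f v) (h2 : 2 ∉ pathTrace f v)
    (hk : k ∈ pathTrace f v) : k ≤ 1 := by
  by_contra hk1
  have h3 : 3 ∉ pathTrace f v := by
    intro h3
    have h4 : 4 ∈ pathTrace f v :=
      (pred_or_succ_mem_pathTrace hK hv h3 (by omega)).resolve_left h2
    by_cases h5 : 5 ∈ pathTrace f v
    · exact absurd (le_and_le_of_mem_pathTrace_of_three_run hK hB hl h3 h4 h5 h0) (by omega)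
    · exact h5 (mem_pathTrace_of_adjacent_far hB (.inl ⟨rfl, rfl⟩) (by omega) (.inl rfl)
        (by omega) (by omega) h0 h1 h2 h4)
  obtain ⟨m, hm5, hm⟩ : ∃ m, 5 ≤ m ∧ m ∈ pathTrace f v := by
    obtain rfl | rfl | rfl | hk5 : k = 2 ∨ k = 3 ∨ k = 4 ∨ 5 ≤ k := by omega
    · exact absurd hk h2
    · exact absurd hk h3
    · exact ⟨5, le_rfl, (pred_or_succ_mem_pathTrace hK hv hk (by omega)).resolve_left h3⟩
    · exact ⟨k, hk5, hk⟩
  have := mem_or_mem_pathTrace_of_far (d := 3) hB (.inl ⟨rfl, rfl, rfl⟩) (by omega) (by omega)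
    h0 h1 hm
  tauto

/-- The path `f` traversed backwards. -/
def reversePath (f : pathGraph l ↪g G) : pathGraph l ↪g G where
  toFun k := f k.rev
  inj' := f.injective.comp Fin.rev_injective
  map_rel_iff' {i j} := by
    simp only [Function.Embedding.coeFn_mk, f.map_adj_iff, pathGraph_adj, Fin.val_rev]
    omega

theorem range_reversePath : Set.range (reversePath f) = Set.range f :=
  Fin.revPerm.surjective.range_comp f

theorem mem_pathTrace_reversePath (h : m + n + 1 = l) :
    m ∈ pathTrace (reversePath f) v ↔ n ∈ pathTrace f v := by
  rw [mem_pathTrace_iff (by omega), mem_pathTrace_iff (by omega)]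
  have : Fin.rev ⟨m, by omega⟩ = (⟨n, by omega⟩ : Fin l) := Fin.ext (by simp; omega)
  exact iff_of_eq (congrArg (fun k => G.Adj v (f k)) this)

theorem le_of_mem_pathTrace_of_final_pair (hK : ¬ ContainsInduced G K13)
    (hB : ¬ ContainsInduced G (Bgraph 2)) (hl : 6 ≤ l) (hv : v ∉ Set.range f) (hi : i + 3 = l)
    (h0 : i ∉ pathTrace f v) (h1 : i + 1 ∈ pathTrace f v) (h2 : i + 2 ∈ pathTrace f v)
    (hk : k ∈ pathTrace f v) : i + 1 ≤ k := by
  obtain ⟨n, hn⟩ : ∃ n, n + k + 1 = l := ⟨l - (k + 1), by have := lt_of_mem_pathTrace hk; omega⟩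
  rw [← range_reversePath] at hv
  rw [← mem_pathTrace_reversePath (m := 2) (by omega)] at h0
  rw [← mem_pathTrace_reversePath (m := 1) (by omega)] at h1
  rw [← mem_pathTrace_reversePath (m := 0) (by omega)] at h2
  rw [← mem_pathTrace_reversePath hn] at hk
  have := le_one_of_mem_pathTrace_of_initial_pair hK hB hl hv h2 h1 h0 hk
  omega

theorem exists_pathTrace_eq_window_of_pair (hK : ¬ ContainsInduced G K13)
    (hB : ¬ ContainsInduced G (Bgraph 2)) (hl : 6 ≤ l) (hv : v ∉ Set.range f)
    (h0 : a ∈ pathTrace f v) (h1 : a + 1 ∈ pathTrace f v) :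
    ∃ i < l, ∀ k < l, k ∈ pathTrace f v ↔ k ≤ i + 1 ∧ i ≤ k + 1 := by
  by_cases hrun : ∃ i, i ∈ pathTrace f v ∧ i + 1 ∈ pathTrace f v ∧ i + 2 ∈ pathTrace f v
  · obtain ⟨i, h0, h1, h2⟩ := hrun
    refine ⟨i + 1, lt_of_mem_pathTrace h1, fun k _ => ⟨fun hk => ?_, fun hk => ?_⟩⟩
    · have := le_and_le_of_mem_pathTrace_of_three_run hK hB hl h0 h1 h2 hk
      omega
    · obtain rfl | rfl | rfl : k = i ∨ k = i + 1 ∨ k = i + 2 := by omega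
      all_goals assumption
  have hal := lt_of_mem_pathTrace h1
  have h2 : a + 2 ∉ pathTrace f v := fun h2 => hrun ⟨a, h0, h1, h2⟩
  obtain rfl | ⟨b, rfl⟩ : a = 0 ∨ ∃ b, a = b + 1 := by cases a <;> simp
  · refine ⟨0, by omega, fun k _ => ⟨fun hk => ?_, fun hk => ?_⟩⟩
    · have := le_one_of_mem_pathTrace_of_initial_pair hK hB hl hv h0 h1 h2 hk
      omega
    · obtain rfl | rfl : k = 0 ∨ k = 1 := by omega
      all_goals assumption
  · have hb : b ∉ pathTrace f v := fun hb => hrun ⟨b, hb, h0, h1⟩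
    have hbl : b + 3 = l := by
      by_contra hne
      exact (mem_or_mem_pathTrace_of_interior_pair hK hB hl (by omega) h0 h1).elim hb h2
    refine ⟨b + 2, by omega, fun k _ => ⟨fun hk => ?_, fun hk => ?_⟩⟩
    · have := le_of_mem_pathTrace_of_final_pair hK hB hl hv hbl hb h0 h1 hk
      omega
    · obtain rfl | rfl : k = b + 1 ∨ k = b + 2 := by omega
      all_goals assumption

theorem pathTrace_subset_ends_or_eq_window (hK : ¬ ContainsInduced G K13)
    (hB : ¬ ContainsInduced G (Bgraph 2)) (hl : 6 ≤ l) (hv : v ∉ Set.range f) :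
    (∀ k ∈ pathTrace f v, k = 0 ∨ k + 1 = l) ∨
      ∃ i < l, ∀ k < l, k ∈ pathTrace f v ↔ k ≤ i + 1 ∧ i ≤ k + 1 := by
  rw [or_iff_not_imp_left]
  intro hne
  push Not at hne
  obtain ⟨k, hk, hk0, hkl⟩ := hne
  obtain ⟨a, rfl⟩ : ∃ a, k = a + 1 := ⟨k - 1, by omega⟩
  have := lt_of_mem_pathTrace hk
  rcases pred_or_succ_mem_pathTrace hK hv hk (by omega) with h | h
  · exact exists_pathTrace_eq_window_of_pair hK hB hl hv h hk
  · exact exists_pathTrace_eq_window_of_pair hK hB hl hv hk h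

theorem closedAdj_apply_iff_mem_pathTrace (hv : v ∉ Set.range f) (k : Fin l) :
    ClosedAdj G v (f k) ↔ (k : ℕ) ∈ pathTrace f v := by
  rw [mem_pathTrace_iff k.2, ← adj_iff_closedAdj_of_ne fun hk => hv ⟨k, hk.symm⟩]

theorem exists_isTwinAt_or_pathTrace_subset_ends (hK : ¬ ContainsInduced G K13)
    (hB : ¬ ContainsInduced G (Bgraph 2)) (hl : 6 ≤ l) (f : pathGraph l ↪g G) (v : V) :
    (∃ i, IsTwinAt f v i) ∨
      v ∉ Set.range f ∧ ∀ k ∈ pathTrace f v, k = 0 ∨ k + 1 = l := by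
  by_cases hv : v ∈ Set.range f
  · obtain ⟨i, rfl⟩ := hv
    exact .inl ⟨i, isTwinAt_apply f i⟩
  rcases pathTrace_subset_ends_or_eq_window hK hB hl hv with h | ⟨i, hi, h⟩
  · exact .inr ⟨hv, h⟩
  · refine .inl ⟨⟨i, hi⟩, fun k => ?_⟩
    rw [closedAdj_apply_iff_mem_pathTrace hv, h k k.2, closedAdj_pathGraph_iff, and_comm]

theorem containsInduced_succ_of_last_mem_pathTrace {f : pathGraph (l + 1) ↪g G}
    (hv : v ∉ Set.range f) (hends : ∀ k ∈ pathTrace f v, k = 0 ∨ k = l)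
    (hlast : l ∈ pathTrace f v) :
    ContainsInduced G (pathGraph (l + 2)) ∨ ContainsInduced G (cycleGraph (l + 2)) := by
  by_cases h0 : 0 ∈ pathTrace f v
  · refine .inr (containsInduced_of_snoc f (fun _ _ => closedAdj_cycleGraph_castSucc_iff) hv
      fun k => ?_)
    have hk : (k : ℕ) ∈ pathTrace f v ↔ (k : ℕ) = 0 ∨ (k : ℕ) = l :=
      ⟨hends k, by rintro (h | h) <;> rwa [h]⟩
    rw [closedAdj_apply_iff_mem_pathTrace hv, hk, closedAdj_cycleGraph_iff]
    simp only [Fin.val_last, Fin.val_castSucc, and_true]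
    omega
  · refine .inl (containsInduced_of_snoc f (fun _ _ => closedAdj_pathGraph_castSucc_iff) hv
      fun k => ?_)
    have hk : (k : ℕ) ∈ pathTrace f v ↔ (k : ℕ) = l :=
      ⟨fun h => (hends k h).resolve_left fun hk0 => h0 (hk0 ▸ h), fun h => by rwa [h]⟩
    rw [closedAdj_apply_iff_mem_pathTrace hv, hk, closedAdj_pathGraph_iff]
    simp only [Fin.val_last, Fin.val_castSucc]
    omega

theorem attachesAsTwin_pathGraph (hK : ¬ ContainsInduced G K13)
    (hB : ¬ ContainsInduced G (Bgraph 2)) (hl : 5 ≤ l)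
    (hP : ¬ ContainsInduced G (pathGraph (l + 2)))
    (hC : ¬ ContainsInduced G (cycleGraph (l + 2))) : AttachesAsTwin G (pathGraph (l + 1)) := by
  rintro f v ⟨k, hk⟩
  refine (exists_isTwinAt_or_pathTrace_subset_ends hK hB (by omega) f v).resolve_right
    fun ⟨hv, hends⟩ => not_or_intro hP hC ?_
  rw [closedAdj_apply_iff_mem_pathTrace hv] at hk
  rcases hends k hk with h0 | hlast
  · rw [← range_reversePath] at hv
    refine containsInduced_succ_of_last_mem_pathTrace hv (fun n hn => ?_)
      ((mem_pathTrace_reversePath (n := 0) (by omega)).2 (h0 ▸ hk))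
    have hnl := lt_of_mem_pathTrace hn
    have := hends (l - n) ((mem_pathTrace_reversePath (by omega)).1 hn)
    omega
  · rw [Nat.succ_injective hlast] at hk
    exact containsInduced_succ_of_last_mem_pathTrace hv
      (fun n hn => (hends n hn).imp_right fun h => Nat.succ_injective h) hk

-- Deleting `w` from the cycle leaves an induced path whose ends are the neighbours of `w`.
theorem exists_closedAdj_iff_off_or_subset (hK : ¬ ContainsInduced G K13)
    (hB : ¬ ContainsInduced G (Bgraph 2)) (hl : 6 ≤ l) (f : cycleGraph (l + 1) ↪g G) (v : V)
    (w : Fin (l + 1)) :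
    (∃ j, ∀ k, k ≠ w → (ClosedAdj G v (f k) ↔ ClosedAdj (cycleGraph (l + 1)) j k)) ∨
      ∀ k, ClosedAdj G v (f k) → ClosedAdj (cycleGraph (l + 1)) w k := by
  obtain ⟨d, rfl⟩ := exists_cycleRotation_eq (Fin.last l) w
  rcases exists_isTwinAt_or_pathTrace_subset_ends hK hB hl
    (f.comp ((cycleRotation d).toEmbedding.comp (pathGraphEmbeddingCycleGraph l))) v
    with ⟨i, hi⟩ | ⟨hv, hends⟩
  · refine .inl ⟨cycleRotation d i.castSucc, fun k hk => ?_⟩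
    obtain ⟨k, rfl⟩ := (cycleRotation d).surjective k
    obtain ⟨k, rfl⟩ := Fin.exists_castSucc_eq.2 fun h => hk (congrArg _ h)
    rw [closedAdj_map_iso_iff, closedAdj_cycleGraph_castSucc_iff]
    exact hi k
  · refine .inr fun k hk => ?_
    obtain ⟨k, rfl⟩ := (cycleRotation d).surjective k
    rw [closedAdj_map_iso_iff]
    cases k using Fin.lastCases with
    | last => exact .refl _
    | cast k =>
      have := hends k ((closedAdj_apply_iff_mem_pathTrace hv k).1 hk)
      simp only [closedAdj_cycleGraph_iff, Fin.val_last, Fin.val_castSucc, and_true]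
      omega

theorem attachesAsTwin_cycleGraph (hK : ¬ ContainsInduced G K13)
    (hB : ¬ ContainsInduced G (Bgraph 2)) (hl : 6 ≤ l) :
    AttachesAsTwin G (cycleGraph (l + 1)) := by
  rintro f v ⟨k₀, hk₀⟩
  obtain ⟨w, hw⟩ := exists_forall_not_closedAdj_cycleGraph (by omega) k₀
  have hwk : k₀ ≠ w := by
    rintro rfl
    exact hw k₀ (.refl _) (.refl _)
  obtain ⟨j, hj⟩ := (exists_closedAdj_iff_off_or_subset hK hB hl f v w).resolve_right
    fun h => hw k₀ (.refl _) (closedAdj_comm.1 (h k₀ hk₀))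
  have hjw := hw j ((hj k₀ hwk).1 hk₀)
  suffices h : ¬ ClosedAdj G v (f w) by
    refine ⟨j, fun k => ?_⟩
    obtain rfl | hk := eq_or_ne k w
    · exact iff_of_false h hjw
    · exact hj k hk
  -- If `v` saw `w` as well, deleting `j` instead of `w` would make `v` agree off `j` with a cycle
  -- vertex, which has to be `j` because it sees both cycle neighbours of `j`.
  intro hvw
  obtain ⟨j', hj'⟩ := (exists_closedAdj_iff_off_or_subset hK hB hl f v j).resolve_right
    fun h => hjw (h w hvw)
  obtain rfl : j' = j := eq_of_forall_ne_closedAdj_cycleGraph (by omega) fun k hk hjk =>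
    (hj' k hk).1 ((hj k fun hkw => hjw (hkw ▸ hjk)).2 hjk)
  exact hjw ((hj' w fun h => hjw (h ▸ .refl _)).1 hvw)

end PathTrace

/-! ### The families `𝒫(p)` -/

theorem exists_containsInduced_pathGraph_not_succ [Finite V] {p : ℕ}
    (hP : ContainsInduced G (pathGraph p)) :
    ∃ l, p ≤ l ∧ ContainsInduced G (pathGraph l) ∧ ¬ ContainsInduced G (pathGraph (l + 1)) := by
  have hbdd : BddAbove {l | ContainsInduced G (pathGraph l)} :=
    ⟨Nat.card V, fun l ⟨f⟩ => by simpa using Nat.card_le_card_of_injective f f.injective⟩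
  exact ⟨_, le_csSup hbdd hP, Nat.sSup_mem ⟨p, hP⟩ hbdd,
    fun h => (Nat.lt_succ_self _).not_ge (le_csSup hbdd h)⟩

theorem isFatCycle_of_containsInduced_cycleGraph (hconn : G.Connected)
    (hK : ¬ ContainsInduced G K13) (hB : ¬ ContainsInduced G (Bgraph 2)) {l : ℕ} (hl : 6 ≤ l)
    (hC : ContainsInduced G (cycleGraph (l + 1))) : IsFatCycle G l := by
  have : Nontrivial (Fin (l + 1)) := Fin.nontrivial_iff_two_le.2 (by omega)
  exact isFatCycle_iff.2 ⟨by omega, exists_isCliqueBlowup hconn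
    cycleGraph_preconnected.exists_adj_of_nontrivial
    (fun i j => .inl (recognizedOff_cycleGraph (by omega) i j))
    (attachesAsTwin_cycleGraph hK hB hl) hC⟩

theorem isFatPath_of_containsInduced_pathGraph (hconn : G.Connected)
    (hK : ¬ ContainsInduced G K13) (hB : ¬ ContainsInduced G (Bgraph 2)) {l : ℕ} (hl : 5 ≤ l)
    (hP : ContainsInduced G (pathGraph (l + 1))) (hP' : ¬ ContainsInduced G (pathGraph (l + 2)))
    (hC : ¬ ContainsInduced G (cycleGraph (l + 2))) : IsFatPath G (l + 1) := by
  have : Nontrivial (Fin (l + 1)) := Fin.nontrivial_iff_two_le.2 (by omega)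
  exact isFatPath_iff.2 ⟨by omega, exists_isCliqueBlowup hconn
    (pathGraph_preconnected _).exists_adj_of_nontrivial
    (recognizedOff_or_recognizedOff_pathGraph (by omega))
    (attachesAsTwin_pathGraph hK hB hl hP' hC) hP⟩

theorem memFatFamily_of_containsInduced_pathGraph [Finite V] (hconn : G.Connected)
    (hK : ¬ ContainsInduced G K13) (hB : ¬ ContainsInduced G (Bgraph 2)) {p : ℕ} (hp : 6 ≤ p)
    (hP : ContainsInduced G (pathGraph p)) : MemFatFamily G p := by
  by_cases hC : ∃ l, p ≤ l ∧ ContainsInduced G (cycleGraph (l + 1))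
  · obtain ⟨l, hpl, hl⟩ := hC
    exact ⟨l, hpl, .inr (isFatCycle_of_containsInduced_cycleGraph hconn hK hB (hp.trans hpl) hl)⟩
  · obtain ⟨l, hpl, hl, hnext⟩ := exists_containsInduced_pathGraph_not_succ hP
    obtain ⟨m, rfl⟩ : ∃ m, l = m + 1 := ⟨l - 1, by omega⟩
    exact ⟨m + 1, hpl, .inl (isFatPath_of_containsInduced_pathGraph hconn hK hB (by omega) hl hnext
      fun h => hC ⟨m + 1, hpl, h⟩)⟩

theorem MemFatFamily.containsInduced_pathGraph {p : ℕ} (h : MemFatFamily G p) :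
    ContainsInduced G (pathGraph p) := by
  obtain ⟨l, hpl, h | h⟩ := h
  · obtain ⟨-, c, hc⟩ := isFatPath_iff.1 h
    exact hc.containsInduced.trans (containsInduced_pathGraph_of_le hpl)
  · obtain ⟨-, c, hc⟩ := isFatCycle_iff.1 h
    exact hc.containsInduced.trans (.trans ⟨pathGraphEmbeddingCycleGraph l⟩
      (containsInduced_pathGraph_of_le hpl))

end

theorem stmt2_general {V : Type*} [Finite V] {p : ℕ} (hp : 6 ≤ p) (G : SimpleGraph V)
    (hconn : G.Connected) (hK13 : ¬ ContainsInduced G K13)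
    (hB12 : ¬ ContainsInduced G (Bgraph 2)) :
    ContainsInduced G (pathGraph p) ↔ MemFatFamily G p :=
  ⟨memFatFamily_of_containsInduced_pathGraph hconn hK13 hB12 hp,
    MemFatFamily.containsInduced_pathGraph⟩

/-- **Theorem 3 (Statement 2).** Let `G` be a connected `{K_{1,3}, B_{1,2}}`-free graph.
Then `G` contains `P₆` as an induced subgraph iff `G` belongs to `𝒫(6)`. -/
theorem stmt2 {V : Type*} [Fintype V] (G : SimpleGraph V) (hconn : G.Connected)
    (hK13 : ¬ ContainsInduced G K13) (hB12 : ¬ ContainsInduced G (Bgraph 2)) :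
    ContainsInduced G (SimpleGraph.pathGraph 6) ↔ MemFatFamily G 6 :=
  stmt2_general le_rfl G hconn hK13 hB12
end

section
/- Let m ≥ 1 be an integer and set q = max{3m−1, m+3}. Let F = F_p(L_1,…,L_q) be a fat q-path (where the joining construction is applied even though q may be less than 5), let K be a nonempty clique with V(F) ∩ K = ∅, and let F′ be the graph obtained from the disjoint union of F and K by joining each vertex of K to each vertex of L_{max{m−1,1}} ∪ L_{max{m,2}} ∪ L_{max{2m,3}} ∪ L_{max{2m+1,4}}. Then F′ is a connected {K_{1,3}, B_{1,m}}-free graph that contains P_q as an induced subgraph, and F′ is neither a fat path nor a fat cycle. -/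
open SimpleGraph

/-- The fundamental clique with (1-based) index `n`, i.e. the paper's `L_n`
(empty when `n ∉ {1, …, l}`). -/
def cliqueAt {V : Type*} {l : ℕ} (L : Fin l → Set V) (n : ℕ) : Set V :=
  {v | ∃ i : Fin l, (i : ℕ) + 1 = n ∧ v ∈ L i}

/-!
Contracting each of the cliques `K, L_1, …, L_q` turns `F′` into a path `1, …, q` with a hub `0`
adjacent to `a, a + 1, c, c + 1`, where `a = max{m-1, 1}` and `c = max{2m, 3}`. Vertices in a common
clique are twins, so a twin-free induced subgraph of `F′` already occurs in the contracted graph;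
this applies to `K_{1,3}` and `B_{1,m}`. The contracted graph is itself twin-free and contains a
triangle, so it is not an induced subgraph of any fat path or fat cycle.

Every neighbourhood of the contracted graph is covered by two cliques, which excludes the claw. In a
copy of `B_{1,m}` with `m ≥ 2`, the triangle must use the hub. If the long branch is attached at
another vertex, it avoids all neighbours of the hub and so lies in one of the three gaps that
`{a, a + 1}` and `{c, c + 1}` leave in the path, all shorter than its `m` vertices. If it is
attached at the hub, the other two triangle vertices are `{a, a + 1}` or `{c, c + 1}`; the last
`m - 1` vertices of the branch avoid the neighbours both of the hub and of `a + 1` or `c`, and this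
makes the middle gap too short for them as well. For `m = 1` the hub dominates the contracted graph,
while no triangle vertex of `B_{1,1}` is adjacent to both pendant vertices.
-/

section CliqueBlowup

variable {V W X : Type*} {G : SimpleGraph V} {H : SimpleGraph W} {p : V → W}

/-- `G` is obtained from `H` by replacing every vertex `i` with a nonempty clique, the fibre
`p ⁻¹' {i}`. Fat paths and fat cycles are the clique blow-ups of paths and cycles. -/
structure IsCliqueBlowup_s15 (G : SimpleGraph V) (H : SimpleGraph W) (p : V → W) : Prop where
  surjective : Function.Surjective p
  adj_iff : ∀ ⦃u v⦄, u ≠ v → (G.Adj u v ↔ p u = p v ∨ H.Adj (p u) (p v))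

/-- Distinct vertices have distinct closed neighbourhoods. -/
def TwinFree (G : SimpleGraph V) : Prop :=
  Function.Injective fun v => insert v (G.neighborSet v)

theorem TwinFree.of_lt [LinearOrder V]
    (h : ∀ u v, u < v → G.Adj u v →
      ∃ w, G.Adj u w ∧ w ≠ v ∧ ¬G.Adj v w ∨ G.Adj v w ∧ w ≠ u ∧ ¬G.Adj u w) :
    TwinFree G := by
  refine Function.Injective.of_lt_imp_ne fun u v huv heq => ?_
  simp only [Set.ext_iff, Set.mem_insert_iff, mem_neighborSet] at heq
  have hadj : G.Adj u v := ((heq v).2 (Or.inl rfl)).resolve_left huv.ne'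
  obtain ⟨w, ⟨huw, hwv, hvw⟩ | ⟨hvw, hwu, huw⟩⟩ := h u v huv hadj
  · exact ((heq w).1 (Or.inr huw)).elim hwv hvw
  · exact ((heq w).2 (Or.inr hvw)).elim hwu huw

theorem exists_isCliqueBlowup_of_partition {L : W → Set V} (hne : ∀ i, (L i).Nonempty)
    (hdisj : ∀ i j, i ≠ j → Disjoint (L i) (L j)) (hcover : ∀ v, ∃ i, v ∈ L i)
    (hadj : ∀ i j u v, u ∈ L i → v ∈ L j → u ≠ v → (G.Adj u v ↔ i = j ∨ H.Adj i j)) :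
    ∃ p, IsCliqueBlowup_s15 G H p := by
  choose p hp using hcover
  refine ⟨p, fun i => ?_, fun u v huv => hadj _ _ u v (hp u) (hp v) huv⟩
  obtain ⟨v, hv⟩ := hne i
  exact ⟨v, by_contra fun hpi => Set.disjoint_left.1 (hdisj _ _ hpi) (hp v) hv⟩

namespace IsCliqueBlowup_s15

theorem containsInduced_s15 (h : IsCliqueBlowup_s15 G H p) : ContainsInduced G H := by
  let s := Function.surjInv h.surjective
  have hs : ∀ i, p (s i) = i := Function.surjInv_eq h.surjective
  have hinj : Function.Injective s := Function.injective_surjInv h.surjective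
  refine ⟨⟨⟨s, hinj⟩, fun {i j} => ?_⟩⟩
  rcases eq_or_ne i j with rfl | hij
  · simp only [SimpleGraph.irrefl]
  · simp only [Function.Embedding.coeFn_mk, h.adj_iff (hinj.ne hij), hs, hij, false_or]

theorem reachable_of_eq (h : IsCliqueBlowup_s15 G H p) {u v : V} (huv : p u = p v) :
    G.Reachable u v := by
  rcases eq_or_ne u v with rfl | hne
  · exact Reachable.refl u
  · exact ((h.adj_iff hne).2 (Or.inl huv)).reachable

theorem connected (h : IsCliqueBlowup_s15 G H p) (hH : H.Connected) : G.Connected := by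
  have : Nonempty V := hH.nonempty.map (Function.surjInv h.surjective)
  refine ⟨fun u v => ?_⟩
  obtain ⟨walk⟩ := hH.preconnected (p u) (p v)
  generalize hi : p u = i, hj : p v = j at walk
  induction walk generalizing u with
  | nil => exact h.reachable_of_eq (hi.trans hj.symm)
  | @cons i k _ hij _ ih =>
    obtain ⟨w, rfl⟩ := h.surjective k
    have huw : G.Adj u w :=
      (h.adj_iff fun e => hij.ne (hi.symm.trans (congrArg p e))).2 (Or.inr (hi ▸ hij))
    exact huw.reachable.trans (ih w rfl hj)

/-- Vertices of a common fibre are twins, so a twin-free induced subgraph meets each fibre at most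
once. -/
theorem containsInduced_of_twinFree {T : SimpleGraph X} (h : IsCliqueBlowup_s15 G H p)
    (hT : TwinFree T) (hGT : ContainsInduced G T) : ContainsInduced H T := by
  obtain ⟨f⟩ := hGT
  have hadj : ∀ {x y}, x ≠ y → (T.Adj x y ↔ p (f x) = p (f y) ∨ H.Adj (p (f x)) (p (f y))) :=
    fun hxy => by rw [← h.adj_iff (f.injective.ne hxy), f.map_adj_iff]
  have hclosed : ∀ x y, y ∈ insert x (T.neighborSet x) ↔
      p (f x) = p (f y) ∨ H.Adj (p (f x)) (p (f y)) := by
    intro x y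
    rcases eq_or_ne x y with rfl | hxy
    · simp only [Set.mem_insert_iff, true_or]
    · rw [← hadj hxy, Set.mem_insert_iff, or_iff_right hxy.symm, mem_neighborSet]
  have hinj : Function.Injective (p ∘ f) := fun x y (hxy : p (f x) = p (f y)) =>
    hT (Set.ext fun w => by rw [hclosed, hclosed, hxy])
  refine ⟨⟨⟨p ∘ f, hinj⟩, fun {x y} => ?_⟩⟩
  rcases eq_or_ne x y with rfl | hxy
  · simp only [SimpleGraph.irrefl]
  · exact ((hadj hxy).trans (or_iff_right (hinj.ne hxy))).symm

end IsCliqueBlowup_s15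

end CliqueBlowup

section FatPathsAndCycles

variable {V : Type*} {G : SimpleGraph V} {l : ℕ}

theorem add_one_mod_eq_iff {n i j : ℕ} (hi : i < n) (hj : j < n) :
    (i + 1) % n = j ↔ i + 1 = j ∨ i + 1 = n ∧ j = 0 := by
  rcases (Nat.succ_le_of_lt hi).lt_or_eq with hlt | rfl
  · rw [Nat.mod_eq_of_lt hlt]
    omega
  · rw [Nat.mod_self]
    omega

theorem cycleGraph_adj_iff_add_one_mod {n : ℕ} (hn : 2 ≤ n) {u v : Fin n} :
    (cycleGraph n).Adj u v ↔ ((u : ℕ) + 1) % n = v ∨ ((v : ℕ) + 1) % n = u := by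
  obtain ⟨n, rfl⟩ := Nat.exists_eq_add_of_le' hn
  rw [cycleGraph_adj, sub_eq_iff_eq_add', sub_eq_iff_eq_add', or_comm]
  simp only [Fin.ext_iff, Fin.val_add, Fin.val_one, eq_comm]

theorem cliqueFree_cycleGraph_three {n : ℕ} (hn : 4 ≤ n) : (cycleGraph n).CliqueFree 3 := by
  classical
  intro s hs
  obtain ⟨u, v, w, huv, huw, hvw, -⟩ := is3Clique_iff.1 hs
  simp only [cycleGraph_adj_iff_add_one_mod (by omega : 2 ≤ n),
    add_one_mod_eq_iff (Fin.is_lt _) (Fin.is_lt _)] at huv huw hvw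
  omega

theorem IsFatPath.exists_isCliqueBlowup (h : IsFatPath G l) :
    ∃ p, IsCliqueBlowup_s15 G (pathGraph l) p := by
  obtain ⟨-, L, ⟨hne, hdisj, hadj⟩, hcover⟩ := h
  refine exists_isCliqueBlowup_of_partition hne hdisj hcover fun i j u v hu hv huv => ?_
  rw [hadj i j u v hu hv huv, pathGraph_adj]

theorem IsFatCycle.exists_isCliqueBlowup (h : IsFatCycle G l) :
    ∃ p, IsCliqueBlowup_s15 G (cycleGraph (l + 1)) p := by
  obtain ⟨hl, L, ⟨hne, hdisj, hadj⟩, hcover⟩ := h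
  refine exists_isCliqueBlowup_of_partition hne hdisj hcover fun i j u v hu hv huv => ?_
  rw [hadj i j u v hu hv huv, cycleGraph_adj_iff_add_one_mod (by omega)]

variable {W : Type*} {H : SimpleGraph W} {p : V → W}

theorem IsCliqueBlowup_s15.cliqueFree_of_isCliqueBlowup {W' : Type*} {H' : SimpleGraph W'} {p' : V → W'}
    (h : IsCliqueBlowup_s15 G H p) (h' : IsCliqueBlowup_s15 G H' p') (hH : TwinFree H) {n : ℕ}
    (hn : H'.CliqueFree n) : H.CliqueFree n := by
  obtain ⟨f⟩ := h'.containsInduced_of_twinFree hH h.containsInduced_s15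
  exact hn.comap f.isContained

theorem IsCliqueBlowup_s15.not_isFatPath (h : IsCliqueBlowup_s15 G H p) (hH : TwinFree H)
    (htri : ¬H.CliqueFree 3) : ¬IsFatPath G l := by
  intro hfat
  obtain ⟨_, h'⟩ := hfat.exists_isCliqueBlowup
  exact htri (h.cliqueFree_of_isCliqueBlowup h' hH cliqueFree_hasse_three)

theorem IsCliqueBlowup_s15.not_isFatCycle (h : IsCliqueBlowup_s15 G H p) (hH : TwinFree H)
    (htri : ¬H.CliqueFree 3) : ¬IsFatCycle G l := by
  intro hfat
  obtain ⟨_, h'⟩ := hfat.exists_isCliqueBlowup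
  have hl := hfat.1
  exact htri (h.cliqueFree_of_isCliqueBlowup h' hH (cliqueFree_cycleGraph_three (by omega)))

end FatPathsAndCycles

section ForbiddenGraphs

variable {m : ℕ}

theorem K13_adj_of_lt {i j : Fin 4} (hij : i < j) : K13.Adj i j ↔ i = 0 := by
  revert i j
  unfold K13 graphOfList
  decide

theorem twinFree_K13 : TwinFree K13 := by
  refine TwinFree.of_lt fun u v huv hadj => ?_
  obtain rfl := (K13_adj_of_lt huv).1 hadj
  unfold K13 graphOfList
  fin_cases v
  · exact absurd huv (lt_irrefl _)
  · exact ⟨2, Or.inl (by decide)⟩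
  · exact ⟨1, Or.inl (by decide)⟩
  · exact ⟨1, Or.inl (by decide)⟩

theorem Bgraph_adj_of_lt {i j : Fin (m + 4)} (hij : i < j) :
    (Bgraph m).Adj i j ↔
      (i : ℕ) = 0 ∧ (j : ℕ) ≤ 3 ∨ (i : ℕ) = 1 ∧ ((j : ℕ) = 2 ∨ (j : ℕ) = 4) ∨
        4 ≤ (i : ℕ) ∧ (j : ℕ) = i + 1 := by
  simp only [Bgraph, fromRel_adj, ne_eq, Fin.ext_iff, Fin.lt_def] at hij ⊢
  omega

theorem twinFree_Bgraph (hm : 1 ≤ m) : TwinFree (Bgraph m) := by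
  refine TwinFree.of_lt fun u v huv hadj => ?_
  simp only [Bgraph, fromRel_adj, ne_eq, Fin.ext_iff]
  rcases (Bgraph_adj_of_lt huv).1 hadj with ⟨hu, hv⟩ | ⟨hu, hv | hv⟩ | ⟨hu, hv⟩
  · rcases hv.lt_or_eq with hv | hv
    · exact ⟨⟨3, by omega⟩, Or.inl (by grind)⟩
    · exact ⟨⟨1, by omega⟩, Or.inl (by simp [hu, hv])⟩
  · exact ⟨⟨4, by omega⟩, Or.inl (by simp [hu, hv])⟩
  · exact ⟨⟨0, by omega⟩, Or.inl (by simp [hu, hv])⟩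
  · rcases hu.eq_or_lt with hu | hu
    · exact ⟨⟨1, by omega⟩, Or.inl (by simp [hv, ← hu])⟩
    · refine ⟨⟨u - 1, by omega⟩, Or.inl ?_⟩
      simp only [hv]
      omega

theorem not_containsInduced_K13_of_neighborSet_subset {V : Type*} {G : SimpleGraph V}
    (h : ∀ v, ∃ s t : Set V, G.IsClique s ∧ G.IsClique t ∧ G.neighborSet v ⊆ s ∪ t) :
    ¬ContainsInduced G K13 := by
  rintro ⟨f⟩
  obtain ⟨s, t, hs, ht, hst⟩ := h (f 0)
  have hleaf : ∀ i, i ≠ 0 → f i ∈ s ∪ t := fun i hi =>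
    hst (f.map_adj_iff.2 ((K13_adj_of_lt (Fin.pos_of_ne_zero hi)).2 rfl))
  have hindep : ∀ {c : Set V}, G.IsClique c → ∀ i j, i ≠ 0 → i < j → f i ∈ c → f j ∉ c :=
    fun hc i j hi hij hic hjc =>
      hi ((K13_adj_of_lt hij).1 (f.map_adj_iff.1 (hc hic hjc (f.injective.ne hij.ne))))
  have hleaf_one : ∀ {c d : Set V}, G.IsClique c → G.IsClique d → (∀ i, i ≠ 0 → f i ∈ c ∪ d) →
      f 1 ∉ c := fun hc hd hcd h1 =>
    hindep hd 2 3 (by decide) (by decide)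
      ((hcd 2 (by decide)).resolve_left (hindep hc 1 2 (by decide) (by decide) h1))
      ((hcd 3 (by decide)).resolve_left (hindep hc 1 3 (by decide) (by decide) h1))
  exact (hleaf 1 (by decide)).elim (hleaf_one hs ht hleaf)
    (hleaf_one ht hs fun i hi => (hleaf i hi).symm)

theorem not_Bgraph_adj_of_lt_three {i j : Fin (m + 4)} (hi : (i : ℕ) < 3) (hj : 4 ≤ (j : ℕ))
    (hij : (i : ℕ) = 1 → 5 ≤ (j : ℕ)) : ¬(Bgraph m).Adj i j := by
  rw [Bgraph_adj_of_lt (Fin.lt_def.2 (by omega))]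
  omega

/-- The final segment, starting at the vertex `k`, of the long branch of `B_{1,m}`. -/
def Bgraph.branchEmbedding {k : ℕ} (hk : 4 ≤ k) : pathGraph (m + 4 - k) ↪g Bgraph m :=
  ⟨⟨fun i => ⟨i + k, by omega⟩, fun i j hij => by simpa [Fin.ext_iff] using hij⟩, fun {i j} => by
    change (Bgraph m).Adj ⟨i + k, _⟩ ⟨j + k, _⟩ ↔ _
    simp only [Bgraph, fromRel_adj, pathGraph_adj, ne_eq, Fin.ext_iff]
    omega⟩

theorem Bgraph.val_branchEmbedding {k : ℕ} (hk : 4 ≤ k) (i : Fin (m + 4 - k)) :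
    (Bgraph.branchEmbedding hk i : ℕ) = i + k := rfl

end ForbiddenGraphs

section PathWithHub

variable {q a c m : ℕ} {S : Set ℕ}

/-- The path `1, …, q` together with a hub, the vertex `0`, adjacent to those path vertices whose
number lies in `S`. -/
def pathWithHub (q : ℕ) (S : Set ℕ) : SimpleGraph (Fin (q + 1)) :=
  fromRel fun i j => (i : ℕ) = 0 ∧ (j : ℕ) ∈ S ∨ (i : ℕ) ≠ 0 ∧ (j : ℕ) = i + 1

theorem pathWithHub_adj_of_lt {i j : Fin (q + 1)} (hij : i < j) :
    (pathWithHub q S).Adj i j ↔ (i : ℕ) = 0 ∧ (j : ℕ) ∈ S ∨ (i : ℕ) ≠ 0 ∧ (j : ℕ) = i + 1 := by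
  simp only [pathWithHub, fromRel_adj, ne_eq, Fin.ext_iff, Fin.lt_def] at hij ⊢
  grind

theorem pathWithHub_adj_iff {i j : Fin (q + 1)} :
    (pathWithHub q S).Adj i j ↔ i ≠ j ∧
      (((i : ℕ) = 0 ∧ (j : ℕ) ∈ S ∨ (i : ℕ) ≠ 0 ∧ (j : ℕ) = i + 1) ∨
      ((j : ℕ) = 0 ∧ (i : ℕ) ∈ S ∨ (j : ℕ) ≠ 0 ∧ (i : ℕ) = j + 1)) := fromRel_adj ..

theorem pathWithHub_zero_adj {j : Fin (q + 1)} :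
    (pathWithHub q S).Adj 0 j ↔ j ≠ 0 ∧ (j : ℕ) ∈ S := by
  simp only [pathWithHub, fromRel_adj, Fin.val_zero, ne_eq, Fin.ext_iff]
  grind

theorem pathWithHub_adj_of_ne_zero {i j : Fin (q + 1)} (hi : i ≠ 0) (hj : j ≠ 0) :
    (pathWithHub q S).Adj i j ↔ (i : ℕ) + 1 = j ∨ (j : ℕ) + 1 = i := by
  simp only [pathWithHub, fromRel_adj, ne_eq, Fin.ext_iff, Fin.val_zero] at hi hj ⊢
  omega

variable (q S) in
/-- The path `1, …, q` inside `pathWithHub q S`. -/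
def pathWithHub.pathEmbedding : pathGraph q ↪g pathWithHub q S :=
  ⟨Fin.succEmb q, fun {i j} => by
    rw [pathGraph_adj, Fin.coe_succEmb,
      pathWithHub_adj_of_ne_zero (Fin.succ_ne_zero i) (Fin.succ_ne_zero j), Fin.val_succ,
      Fin.val_succ, Nat.add_right_cancel_iff, Nat.add_right_cancel_iff]⟩

theorem connected_pathWithHub {s : ℕ} (hs : s ∈ S) (hs0 : 1 ≤ s) (hsq : s ≤ q) :
    (pathWithHub q S).Connected := by
  let b : Fin q := ⟨s - 1, by omega⟩
  have hb : (b.succ : ℕ) = s := Nat.sub_add_cancel hs0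
  have hreach : ∀ i, (pathWithHub q S).Reachable i b.succ := by
    refine Fin.cases ?_ fun i => ?_
    · exact (pathWithHub_zero_adj.2 ⟨Fin.succ_ne_zero b, hb.symm ▸ hs⟩).reachable
    · exact (pathGraph_preconnected q i b).map (pathWithHub.pathEmbedding q S).toHom
  exact ⟨fun i j => (hreach i).trans (hreach j).symm⟩

theorem not_cliqueFree_three_pathWithHub (ha : 1 ≤ a) (haq : a + 1 ≤ q) (haS : a ∈ S)
    (haS' : a + 1 ∈ S) : ¬(pathWithHub q S).CliqueFree 3 := by
  intro h
  let u : Fin (q + 1) := ⟨a, by omega⟩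
  let v : Fin (q + 1) := ⟨a + 1, by omega⟩
  have hu : u ≠ 0 := Fin.ne_of_val_ne (Nat.ne_of_gt ha)
  have hv : v ≠ 0 := Fin.ne_of_val_ne (Nat.succ_ne_zero a)
  exact h {0, u, v} (is3Clique_triple_iff.2 ⟨pathWithHub_zero_adj.2 ⟨hu, haS⟩,
    pathWithHub_zero_adj.2 ⟨hv, haS'⟩, (pathWithHub_adj_of_ne_zero hu hv).2 (Or.inl rfl)⟩)

theorem eq_zero_of_triangle_pathWithHub {i j k : Fin (q + 1)} (hij : (pathWithHub q S).Adj i j)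
    (hik : (pathWithHub q S).Adj i k) (hjk : (pathWithHub q S).Adj j k) :
    i = 0 ∨ j = 0 ∨ k = 0 := by
  by_contra! h
  rw [pathWithHub_adj_of_ne_zero h.1 h.2.1] at hij
  rw [pathWithHub_adj_of_ne_zero h.1 h.2.2] at hik
  rw [pathWithHub_adj_of_ne_zero h.2.1 h.2.2] at hjk
  omega

theorem twinFree_pathWithHub (ha : 1 ≤ a) (hac : a + 2 ≤ c) (hcq : c + 1 ≤ q) :
    TwinFree (pathWithHub q {a, a + 1, c, c + 1}) := by
  refine TwinFree.of_lt fun u v huv hadj => ?_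
  rw [pathWithHub_adj_of_lt huv] at hadj
  simp only [pathWithHub_adj_iff, ne_eq, Fin.ext_iff, Set.mem_insert_iff,
    Set.mem_singleton_iff] at hadj ⊢
  rcases hadj with ⟨hu, hv⟩ | ⟨hu, hv⟩
  · rcases le_or_gt (v : ℕ) (a + 1) with hva | hva
    · exact ⟨⟨c + 1, by omega⟩, Or.inl (by grind)⟩
    · exact ⟨⟨a, by omega⟩, Or.inl (by grind)⟩
  · rcases lt_or_ge (v : ℕ) q with hvq | hvq
    · exact ⟨⟨u + 2, by omega⟩, Or.inr (by grind)⟩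
    · exact ⟨⟨u - 1, by omega⟩, Or.inl (by grind)⟩

theorem isClique_pathWithHub_pair {k l : ℕ} (h : k ≠ 0 ∧ l = k + 1 ∨ k = 0 ∧ l ∈ S) :
    (pathWithHub q S).IsClique {x | (x : ℕ) = k ∨ (x : ℕ) = l} := by
  intro x hx y hy hxy
  simp only [Set.mem_ofPred_eq] at hx hy
  rw [pathWithHub_adj_iff]
  grind

theorem exists_isClique_neighborSet_pathWithHub_subset (v : Fin (q + 1)) :
    ∃ s t : Set (Fin (q + 1)), (pathWithHub q {a, a + 1, c, c + 1}).IsClique s ∧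
      (pathWithHub q {a, a + 1, c, c + 1}).IsClique t ∧
      (pathWithHub q {a, a + 1, c, c + 1}).neighborSet v ⊆ s ∪ t := by
  have hsingle : ∀ k : ℕ, (pathWithHub q {a, a + 1, c, c + 1}).IsClique {x | (x : ℕ) = k} :=
    fun k => IsClique.of_subsingleton fun x hx y hy => Fin.ext (Eq.trans hx (Eq.symm hy))
  have hnbr : ∀ {w}, (pathWithHub q {a, a + 1, c, c + 1}).Adj v w →
      (v : ℕ) = 0 ∧ ((w : ℕ) = a ∨ (w : ℕ) = a + 1 ∨ (w : ℕ) = c ∨ (w : ℕ) = c + 1) ∨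
        (w : ℕ) = 0 ∧ ((v : ℕ) = a ∨ (v : ℕ) = a + 1 ∨ (v : ℕ) = c ∨ (v : ℕ) = c + 1) ∨
        (v : ℕ) ≠ 0 ∧ ((w : ℕ) = v - 1 ∨ (w : ℕ) = v + 1) := by
    intro w hw
    simp only [pathWithHub_adj_iff, ne_eq, Fin.ext_iff, Set.mem_insert_iff,
      Set.mem_singleton_iff] at hw
    omega
  by_cases hv : (v : ℕ) = 0
  · refine ⟨_, _, isClique_pathWithHub_pair (k := a) (l := a + 1) (by grind),
      isClique_pathWithHub_pair (k := c) (l := c + 1) (by grind), fun w hw => ?_⟩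
    have := hnbr hw
    simp only [Set.mem_union, Set.mem_ofPred_eq]
    omega
  by_cases hvl : (v : ℕ) = a ∨ (v : ℕ) = c
  · refine ⟨_, _, isClique_pathWithHub_pair (k := 0) (l := v + 1) (by grind), hsingle (v - 1),
      fun w hw => ?_⟩
    have := hnbr hw
    simp only [Set.mem_union, Set.mem_ofPred_eq]
    omega
  by_cases hvr : (v : ℕ) = a + 1 ∨ (v : ℕ) = c + 1
  · refine ⟨_, _, isClique_pathWithHub_pair (k := 0) (l := v - 1) (by grind), hsingle (v + 1),
      fun w hw => ?_⟩
    have := hnbr hw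
    simp only [Set.mem_union, Set.mem_ofPred_eq]
    omega
  · refine ⟨_, _, hsingle (v - 1), hsingle (v + 1), fun w hw => ?_⟩
    have := hnbr hw
    simp only [Set.mem_union, Set.mem_ofPred_eq]
    omega

theorem card_add_lt_of_adj_of_avoids {W : Type*} [Fintype W] {X : SimpleGraph W}
    (hX : X.Preconnected) {f : W → ℕ} (hf : Function.Injective f)
    (hadj : ∀ u v, X.Adj u v → f u + 1 = f v ∨ f v + 1 = f u) {lo hi : ℕ}
    (hlo : ∀ w, f w ≠ lo) (hhi : ∀ w, f w ≠ hi) {w₀ : W} (hw₀ : f w₀ ∈ Finset.Ioo lo hi) :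
    Fintype.card W + lo < hi := by
  have hbetween : ∀ w, f w ∈ Finset.Ioo lo hi := by
    intro w
    obtain ⟨walk⟩ := hX w₀ w
    induction walk with
    | nil => exact hw₀
    | @cons u v _ huv _ ih =>
      refine ih ?_
      have := hadj u v huv
      have := hlo v
      have := hhi v
      rw [Finset.mem_Ioo] at hw₀ ⊢
      omega
  have hcard : Fintype.card W ≤ (Finset.Ioo lo hi).card :=
    Finset.card_le_card_of_injOn f (fun w _ => hbetween w) hf.injOn
  rw [Nat.card_Ioo] at hcard
  rw [Finset.mem_Ioo] at hw₀
  omega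

theorem card_lt_or_of_embedding_pathWithHub {W : Type*} [Fintype W] {X : SimpleGraph W}
    (hX : X.Connected) (g : X ↪g pathWithHub q S) (hg : ∀ w, g w ≠ 0) {a b d e : ℕ}
    (hab : a ≤ b) (hde : d ≤ e) (hgab : ∀ w, (g w : ℕ) ∉ Set.Icc a b)
    (hgde : ∀ w, (g w : ℕ) ∉ Set.Icc d e) :
    Fintype.card W < a ∨ Fintype.card W + b < d ∨ Fintype.card W + e ≤ q := by
  simp only [Set.mem_Icc] at hgab hgde
  have hcount : ∀ lo hi w, (∀ w, (g w : ℕ) ≠ lo) → (∀ w, (g w : ℕ) ≠ hi) → lo < (g w : ℕ) →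
      (g w : ℕ) < hi → Fintype.card W + lo < hi := fun lo hi w hlo hhi hw hw' =>
    card_add_lt_of_adj_of_avoids hX.preconnected (Fin.val_injective.comp g.injective)
      (fun u v huv => (pathWithHub_adj_of_ne_zero (hg u) (hg v)).1 (g.map_adj_iff.2 huv))
      hlo hhi (Finset.mem_Ioo.2 ⟨hw, hw'⟩)
  have hpos : ∀ w, (g w : ℕ) ≠ 0 := fun w => Fin.val_ne_zero_iff.2 (hg w)
  obtain ⟨w⟩ := hX.nonempty
  rcases lt_or_ge (g w : ℕ) a with hwa | hwa
  · exact Or.inl (hcount 0 a w hpos (by grind) (by grind) hwa)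
  rcases lt_or_ge (g w : ℕ) d with hwd | hwd
  · exact Or.inr (Or.inl (hcount b d w (by grind) (by grind) (by grind) hwd))
  · exact Or.inr (Or.inr (Nat.lt_succ_iff.1
      (hcount e (q + 1) w (by grind) (by grind) (by grind) (by grind))))

theorem apply_ne_zero_and_notMem_of_not_adj {W : Type*} {X : SimpleGraph W}
    (f : X ↪g pathWithHub q S) {u v : W} (hu : f u = 0) (huv : u ≠ v) (hadj : ¬X.Adj u v) :
    f v ≠ 0 ∧ (f v : ℕ) ∉ S := by
  have hv : f v ≠ 0 := hu ▸ f.injective.ne huv.symm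
  rw [← f.map_adj_iff, hu, pathWithHub_zero_adj] at hadj
  exact ⟨hv, fun hvS => hadj ⟨hv, hvS⟩⟩

theorem Bgraph_embedding_add_four_lt_or (f : Bgraph m ↪g pathWithHub q S) {k : ℕ}
    (hk : 4 ≤ k) (hkm : k < m + 4) (hf : ∀ i : Fin (m + 4), k ≤ (i : ℕ) → f i ≠ 0) {a b d e : ℕ}
    (hab : a ≤ b) (hde : d ≤ e) (hfab : ∀ i : Fin (m + 4), k ≤ (i : ℕ) → (f i : ℕ) ∉ Set.Icc a b)
    (hfde : ∀ i : Fin (m + 4), k ≤ (i : ℕ) → (f i : ℕ) ∉ Set.Icc d e) :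
    m + 4 < a + k ∨ m + 4 + b < d + k ∨ m + 4 + e ≤ q + k := by
  have hbranch : ∀ i : Fin (m + 4 - k), k ≤ (Bgraph.branchEmbedding hk i : ℕ) := fun i =>
    (Nat.le_add_left k i).trans_eq (Bgraph.val_branchEmbedding hk i).symm
  have : NeZero (m + 4 - k) := ⟨by omega⟩
  have hcard := card_lt_or_of_embedding_pathWithHub ⟨pathGraph_preconnected (m + 4 - k)⟩
    (f.comp (Bgraph.branchEmbedding hk)) (fun i => hf _ (hbranch i)) hab hde
    (fun i => hfab _ (hbranch i)) (fun i => hfde _ (hbranch i))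
  rw [Fintype.card_fin] at hcard
  omega

theorem Bgraph_embedding_exists_lt_three_eq_zero (f : Bgraph m ↪g pathWithHub q S) :
    ∃ i : Fin (m + 4), (i : ℕ) < 3 ∧ f i = 0 := by
  have hadj : ∀ {i j : Fin (m + 4)}, (i : ℕ) < j → (j : ℕ) < 3 →
      (pathWithHub q S).Adj (f i) (f j) := fun hij hj =>
    f.map_adj_iff.2 ((Bgraph_adj_of_lt hij).2 (by omega))
  rcases eq_zero_of_triangle_pathWithHub
    (hadj (i := ⟨0, by omega⟩) (j := ⟨1, by omega⟩) Nat.zero_lt_one (by norm_num))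
    (hadj (j := ⟨2, by omega⟩) Nat.zero_lt_two (by norm_num))
    (hadj Nat.one_lt_two (by norm_num)) with h | h | h
  exacts [⟨_, Nat.zero_lt_succ 2, h⟩, ⟨_, by norm_num, h⟩, ⟨_, Nat.lt_succ_self 2, h⟩]

theorem not_containsInduced_Bgraph_pathWithHub_of_dominating (hm : 1 ≤ m)
    (hS : ∀ j, 1 ≤ j → j ≤ q → j ∈ S) : ¬ContainsInduced (pathWithHub q S) (Bgraph m) := by
  rintro ⟨f⟩
  obtain ⟨i, hi3, hi⟩ := Bgraph_embedding_exists_lt_three_eq_zero f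
  have hdom : ∀ j, i < j → (Bgraph m).Adj i j := fun j hij => by
    have hj : f j ≠ 0 := hi ▸ f.injective.ne hij.ne'
    rw [← f.map_adj_iff, hi, pathWithHub_zero_adj]
    exact ⟨hj, hS _ (Nat.one_le_iff_ne_zero.2 (Fin.val_ne_zero_iff.2 hj)) (by omega)⟩
  have h3 := hdom ⟨3, by omega⟩ hi3
  have hi4 : i < ⟨4, by omega⟩ := hi3.trans (Nat.lt_succ_self 3)
  have h4 := hdom _ hi4
  rw [Bgraph_adj_of_lt hi3] at h3
  rw [Bgraph_adj_of_lt hi4] at h4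
  dsimp only at h3 h4
  omega

theorem Bgraph_embedding_one_eq_zero (ham : a + 1 ≤ m) (hcm : c ≤ a + m + 1) (hqm : q < c + m)
    (f : Bgraph m ↪g pathWithHub q {a, a + 1, c, c + 1}) : f ⟨1, by omega⟩ = 0 := by
  obtain ⟨h, hh3, hh⟩ := Bgraph_embedding_exists_lt_three_eq_zero f
  by_contra hne
  have hh1 : (h : ℕ) ≠ 1 := fun h1 => hne ((congrArg f (Fin.ext h1)).symm.trans hh)
  have hmiss : ∀ j : Fin (m + 4), 4 ≤ (j : ℕ) →
      f j ≠ 0 ∧ (f j : ℕ) ∉ ({a, a + 1, c, c + 1} : Set ℕ) := fun j hj =>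
    apply_ne_zero_and_notMem_of_not_adj f hh (by omega)
      (not_Bgraph_adj_of_lt_three hh3 hj fun h1 => absurd h1 hh1)
  have := Bgraph_embedding_add_four_lt_or f (k := 4) le_rfl (by omega)
    (fun j hj => (hmiss j hj).1) (Nat.le_succ a) (Nat.le_succ c)
    (fun j hj => by grind) (fun j hj => by grind)
  omega

theorem Bgraph_embedding_exists_eq_of_one_eq_zero (hac : a + 3 ≤ c)
    (f : Bgraph m ↪g pathWithHub q {a, a + 1, c, c + 1}) (hhub : f ⟨1, by omega⟩ = 0) :
    ∃ i : Fin (m + 4), (i : ℕ) ≠ 1 ∧ (i : ℕ) < 3 ∧ ((f i : ℕ) = a + 1 ∨ (f i : ℕ) = c) := by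
  have hadj : ∀ {i j : Fin (m + 4)}, (i : ℕ) < j → (j : ℕ) < 3 →
      (pathWithHub q {a, a + 1, c, c + 1}).Adj (f i) (f j) := fun hij hj =>
    f.map_adj_iff.2 ((Bgraph_adj_of_lt hij).2 (by omega))
  let i₀ : Fin (m + 4) := ⟨0, by omega⟩
  let i₂ : Fin (m + 4) := ⟨2, by omega⟩
  have h₀ := (hadj (i := i₀) (j := ⟨1, by omega⟩) Nat.zero_lt_one (by norm_num)).symm
  have h₂ := hadj (i := ⟨1, by omega⟩) (j := i₂) Nat.one_lt_two (Nat.lt_succ_self 2)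
  have h₀₂ := hadj (i := i₀) (j := i₂) Nat.zero_lt_two (Nat.lt_succ_self 2)
  rw [hhub, pathWithHub_zero_adj] at h₀ h₂
  rw [pathWithHub_adj_of_ne_zero h₀.1 h₂.1] at h₀₂
  have hcases : ((f i₀ : ℕ) = a + 1 ∨ (f i₀ : ℕ) = c) ∨ (f i₂ : ℕ) = a + 1 ∨ (f i₂ : ℕ) = c := by
    grind
  rcases hcases with h | h
  exacts [⟨i₀, Nat.zero_ne_one, Nat.zero_lt_succ 2, h⟩,
    ⟨i₂, Nat.succ_ne_self 1, Nat.lt_succ_self 2, h⟩]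

theorem Bgraph_embedding_one_ne_zero (ha : 1 ≤ a) (ham : a + 1 ≤ m) (hac : a + 3 ≤ c)
    (hcm : c ≤ a + m + 1) (hqm : q < c + m)
    (f : Bgraph m ↪g pathWithHub q {a, a + 1, c, c + 1}) : f ⟨1, by omega⟩ ≠ 0 := by
  intro hhub
  obtain ⟨i, hi1, hi3, hi⟩ := Bgraph_embedding_exists_eq_of_one_eq_zero hac f hhub
  have hi0 : f i ≠ 0 := hhub ▸ f.injective.ne (Fin.ne_of_val_ne hi1)
  have hmiss : ∀ j : Fin (m + 4), 5 ≤ (j : ℕ) →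
      f j ≠ 0 ∧ (f j : ℕ) ∉ ({a, a + 1, c, c + 1} : Set ℕ) := fun j hj =>
    apply_ne_zero_and_notMem_of_not_adj f hhub (Fin.ne_of_val_ne (by dsimp only; omega))
      (not_Bgraph_adj_of_lt_three (by norm_num) (by omega) fun _ => hj)
  have hfar : ∀ j : Fin (m + 4), 5 ≤ (j : ℕ) →
      ¬((f i : ℕ) + 1 = f j ∨ (f j : ℕ) + 1 = f i) := fun j hj => by
    rw [← pathWithHub_adj_of_ne_zero hi0 (hmiss j hj).1, f.map_adj_iff]
    exact not_Bgraph_adj_of_lt_three hi3 (by omega) fun _ => hj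
  have hbranch := fun b d => Bgraph_embedding_add_four_lt_or f (k := 5) (by omega)
    (by omega) (fun j hj => (hmiss j hj).1) (a := a) (b := b) (d := d) (e := c + 1)
  rcases hi with hi | hi
  · have := hbranch (a + 2) c (by omega) (by omega) (fun j hj => by grind) (fun j hj => by grind)
    omega
  · have := hbranch (a + 1) (c - 1) (by omega) (by omega) (fun j hj => by grind)
      (fun j hj => by grind)
    omega

theorem not_containsInduced_Bgraph_pathWithHub (ha : 1 ≤ a) (ham : a + 1 ≤ m) (hac : a + 3 ≤ c)
    (hcm : c ≤ a + m + 1) (hqm : q < c + m) :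
    ¬ContainsInduced (pathWithHub q {a, a + 1, c, c + 1}) (Bgraph m) := fun ⟨f⟩ =>
  Bgraph_embedding_one_ne_zero ha ham hac hcm hqm f (Bgraph_embedding_one_eq_zero ham hcm hqm f)

theorem not_containsInduced_Bgraph_pathWithHub_of_eq_max (hm : 1 ≤ m) (ha : a = max (m - 1) 1)
    (hc : c = max (2 * m) 3) (hq : q = max (3 * m - 1) (m + 3)) :
    ¬ContainsInduced (pathWithHub q {a, a + 1, c, c + 1}) (Bgraph m) := by
  rcases hm.eq_or_lt with rfl | hm
  · refine not_containsInduced_Bgraph_pathWithHub_of_dominating le_rfl fun j hj hjq => ?_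
    simp only [Set.mem_insert_iff, Set.mem_singleton_iff]
    omega
  · exact not_containsInduced_Bgraph_pathWithHub (by omega) (by omega) (by omega) (by omega)
      (by omega)

theorem exists_isCliqueBlowup_pathWithHub {V : Type*} {G : SimpleGraph V} {L : Fin q → Set V}
    {K N : Set V} (hLne : ∀ i, (L i).Nonempty) (hLdisj : ∀ i j, i ≠ j → Disjoint (L i) (L j))
    (hKne : K.Nonempty) (hKdisj : ∀ i, Disjoint K (L i)) (hcover : ∀ v, v ∈ K ∨ ∃ i, v ∈ L i)
    (hN : ∀ i v, v ∈ L i → (v ∈ N ↔ (i : ℕ) + 1 ∈ S))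
    (hadj : ∀ u v, u ≠ v → (G.Adj u v ↔
      (∃ i j, u ∈ L i ∧ v ∈ L j ∧ (i = j ∨ (i : ℕ) + 1 = j ∨ (j : ℕ) + 1 = i)) ∨
      (u ∈ K ∧ v ∈ K) ∨ (u ∈ K ∧ v ∈ N) ∨ (v ∈ K ∧ u ∈ N))) :
    ∃ p, IsCliqueBlowup_s15 G (pathWithHub q S) p := by
  have hunique : ∀ {i j v}, v ∈ L i → v ∈ L j → i = j := fun {i j _} hi hj =>
    by_contra fun hij => Set.disjoint_left.1 (hLdisj i j hij) hi hj
  have hnotK : ∀ {i v}, v ∈ L i → v ∉ K := fun {i _} hv => Set.disjoint_right.1 (hKdisj i) hv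
  have hKL : ∀ j u v, u ∈ K → v ∈ L j → (G.Adj u v ↔ (pathWithHub q S).Adj 0 j.succ) := by
    intro j u v hu hv
    have hne : u ≠ v := fun h => hnotK hv (h ▸ hu)
    have hnotL : ∀ i, u ∉ L i := fun i hi => hnotK hi hu
    simp only [hadj u v hne, hnotL, hu, hnotK hv, hN j v hv, pathWithHub_zero_adj, Fin.val_succ,
      ne_eq, Fin.succ_ne_zero, not_false_eq_true, false_and, exists_false, true_and, false_or,
      or_false]
  have hLL : ∀ i j u v, u ∈ L i → v ∈ L j → u ≠ v →
      (G.Adj u v ↔ i = j ∨ (pathWithHub q S).Adj i.succ j.succ) := by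
    intro i j u v hu hv hne
    rw [hadj u v hne, pathWithHub_adj_of_ne_zero (Fin.succ_ne_zero i) (Fin.succ_ne_zero j)]
    simp only [hnotK hu, hnotK hv, Fin.val_succ, Nat.add_right_cancel_iff, false_and, or_false]
    refine ⟨?_, fun h => ⟨i, j, hu, hv, h⟩⟩
    rintro ⟨i', j', hu', hv', h⟩
    rwa [hunique hu hu', hunique hv hv']
  refine exists_isCliqueBlowup_of_partition (L := Fin.cons K L) (Fin.cases hKne hLne) ?_
    (fun v => (hcover v).elim (fun h => ⟨0, h⟩) fun ⟨i, h⟩ => ⟨i.succ, h⟩) ?_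
  · refine Fin.cases (Fin.cases (absurd rfl) fun j _ => hKdisj j) fun i => Fin.cases ?_ fun j => ?_
    · exact fun _ => (hKdisj i).symm
    · exact fun hij => hLdisj i j fun h => hij (congrArg Fin.succ h)
  · refine Fin.cases (Fin.cases ?_ fun j => ?_) fun i => Fin.cases ?_ fun j => ?_
    all_goals
      intro u v hu hv hne
      simp only [Fin.cons_zero, Fin.cons_succ] at hu hv
    · exact iff_of_true ((hadj u v hne).2 (Or.inr (Or.inl ⟨hu, hv⟩))) (Or.inl rfl)
    · rw [hKL j u v hu hv, or_iff_right (Fin.succ_ne_zero j).symm]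
    · rw [G.adj_comm, hKL i v u hv hu, or_iff_right (Fin.succ_ne_zero i), adj_comm]
    · rw [hLL i j u v hu hv hne, Fin.succ_inj]

end PathWithHub

theorem mem_cliqueAt_iff {V : Type*} {l n : ℕ} {L : Fin l → Set V}
    (hL : ∀ i j, i ≠ j → Disjoint (L i) (L j)) {i : Fin l} {v : V} (hv : v ∈ L i) :
    v ∈ cliqueAt L n ↔ (i : ℕ) + 1 = n := by
  refine ⟨?_, fun h => ⟨i, h, hv⟩⟩
  rintro ⟨j, hj, hvj⟩
  obtain rfl : i = j := by_contra fun hij => Set.disjoint_left.1 (hL i j hij) hv hvj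
  exact hj

theorem stmt15_general {V : Type*} (m : ℕ) (hm : 1 ≤ m) (G : SimpleGraph V)
    (L : Fin (max (3 * m - 1) (m + 3)) → Set V) (K : Set V)
    (hLne : ∀ i, (L i).Nonempty)
    (hLdisj : ∀ i j, i ≠ j → Disjoint (L i) (L j))
    (hKne : K.Nonempty)
    (hKdisj : ∀ i, Disjoint K (L i))
    (hcover : ∀ v : V, v ∈ K ∨ ∃ i, v ∈ L i)
    (hadj : ∀ u v : V, u ≠ v → (G.Adj u v ↔
      (∃ i j : Fin (max (3 * m - 1) (m + 3)), u ∈ L i ∧ v ∈ L j ∧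
        (i = j ∨ (i : ℕ) + 1 = (j : ℕ) ∨ (j : ℕ) + 1 = (i : ℕ))) ∨
      (u ∈ K ∧ v ∈ K) ∨
      (u ∈ K ∧ v ∈ cliqueAt L (max (m - 1) 1) ∪ cliqueAt L (max m 2) ∪
        cliqueAt L (max (2 * m) 3) ∪ cliqueAt L (max (2 * m + 1) 4)) ∨
      (v ∈ K ∧ u ∈ cliqueAt L (max (m - 1) 1) ∪ cliqueAt L (max m 2) ∪
        cliqueAt L (max (2 * m) 3) ∪ cliqueAt L (max (2 * m + 1) 4)))) :
    G.Connected ∧ ¬ ContainsInduced G K13 ∧ ¬ ContainsInduced G (Bgraph m) ∧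
      ContainsInduced G (SimpleGraph.pathGraph (max (3 * m - 1) (m + 3))) ∧
      (∀ l, ¬ IsFatPath G l) ∧ (∀ l, ¬ IsFatCycle G l) := by
  generalize ha : max (m - 1) 1 = a at hadj
  generalize hc : max (2 * m) 3 = c at hadj
  rw [show max m 2 = a + 1 by omega, show max (2 * m + 1) 4 = c + 1 by omega] at hadj
  obtain ⟨p, hp⟩ := exists_isCliqueBlowup_pathWithHub (S := {a, a + 1, c, c + 1}) hLne hLdisj hKne
    hKdisj hcover (fun i v hv => by
      simp only [Set.mem_union, mem_cliqueAt_iff hLdisj hv, Set.mem_insert_iff,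
        Set.mem_singleton_iff, or_assoc]) hadj
  have htwin := twinFree_pathWithHub (q := max (3 * m - 1) (m + 3)) (a := a) (c := c)
    (by omega) (by omega) (by omega)
  have htriangle := not_cliqueFree_three_pathWithHub (q := max (3 * m - 1) (m + 3)) (a := a)
    (S := {a, a + 1, c, c + 1}) (by omega) (by omega) (by simp) (by simp)
  refine ⟨hp.connected (connected_pathWithHub (s := a) (by simp) (by omega) (by omega)),
    fun h => ?_, fun h => ?_, ?_, fun l => hp.not_isFatPath htwin htriangle,
    fun l => hp.not_isFatCycle htwin htriangle⟩
  · exact not_containsInduced_K13_of_neighborSet_subset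
      exists_isClique_neighborSet_pathWithHub_subset (hp.containsInduced_of_twinFree twinFree_K13 h)
  · exact not_containsInduced_Bgraph_pathWithHub_of_eq_max hm ha.symm hc.symm rfl
      (hp.containsInduced_of_twinFree (twinFree_Bgraph hm) h)
  · obtain ⟨f⟩ := hp.containsInduced_s15
    exact ⟨f.comp (pathWithHub.pathEmbedding _ _)⟩

/-- **Remark after Theorem 4 (Statement 15).** Let `m ≥ 1` and `q = max{3m−1, m+3}`.
Let `F = F_p(L_1,…,L_q)` (the joining construction, even though possibly `q < 5`), let `K`
be a nonempty clique disjoint from `F`, and let `F′` be obtained from `F ∪ K` by joining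
every vertex of `K` to every vertex of
`L_{max{m−1,1}} ∪ L_{max{m,2}} ∪ L_{max{2m,3}} ∪ L_{max{2m+1,4}}` (1-based indexing,
`L_n = cliqueAt L n`).  Then `F′` is a connected `{K_{1,3}, B_{1,m}}`-free graph containing
`P_q` as an induced subgraph, and `F′` is neither a fat path nor a fat cycle. -/
theorem stmt15 {V : Type*} [Fintype V] (m : ℕ) (hm : 1 ≤ m) (G : SimpleGraph V)
    (L : Fin (max (3 * m - 1) (m + 3)) → Set V) (K : Set V)
    (hLne : ∀ i, (L i).Nonempty)
    (hLdisj : ∀ i j, i ≠ j → Disjoint (L i) (L j))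
    (hKne : K.Nonempty)
    (hKdisj : ∀ i, Disjoint K (L i))
    (hcover : ∀ v : V, v ∈ K ∨ ∃ i, v ∈ L i)
    (hadj : ∀ u v : V, u ≠ v → (G.Adj u v ↔
      (∃ i j : Fin (max (3 * m - 1) (m + 3)), u ∈ L i ∧ v ∈ L j ∧
        (i = j ∨ (i : ℕ) + 1 = (j : ℕ) ∨ (j : ℕ) + 1 = (i : ℕ))) ∨
      (u ∈ K ∧ v ∈ K) ∨
      (u ∈ K ∧ v ∈ cliqueAt L (max (m - 1) 1) ∪ cliqueAt L (max m 2) ∪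
        cliqueAt L (max (2 * m) 3) ∪ cliqueAt L (max (2 * m + 1) 4)) ∨
      (v ∈ K ∧ u ∈ cliqueAt L (max (m - 1) 1) ∪ cliqueAt L (max m 2) ∪
        cliqueAt L (max (2 * m) 3) ∪ cliqueAt L (max (2 * m + 1) 4)))) :
    G.Connected ∧ ¬ ContainsInduced G K13 ∧ ¬ ContainsInduced G (Bgraph m) ∧
      ContainsInduced G (SimpleGraph.pathGraph (max (3 * m - 1) (m + 3))) ∧
      (∀ l, ¬ IsFatPath G l) ∧ (∀ l, ¬ IsFatCycle G l) :=
  stmt15_general m hm G L K hLne hLdisj hKne hKdisj hcover hadj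
end
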